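/- arXiv:math/0402282 — 2 statements merged into one kernel-verified Lean document; each statement's English description precedes it below -/
import Mathlib

section
/- Consider the metric g on ℝ^{2r+2} with coordinates (u_1,...,u_r,v_1,...,v_r,x,y) given by g(∂_x,∂_y)=1, g(∂_{u_i},∂_{v_j})=δ_{ij}, and g(∂_x,∂_x) = -2u_1v_2 - ... - 2u_{r-1}v_r - 2ψ(u_r) for ψ ∈ C^∞(ℝ). Then the only nonzero components of its curvature tensor R are R(∂_x,∂_{u_r},∂_{u_r},∂_x) = ψ''(u_r) and R(∂_x,∂_{u_i},∂_{v_{i+1}},∂_x) = 1 for 1 ≤ i ≤ r-1, and the only nonzero component of ∇R is ∇R(∂_x,∂_{u_r},∂_{u_r},∂_x;∂_{u_r}) = ψ'''(u_r). -/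
section CoordinateGeometry

variable {ι : Type*} [Fintype ι] [DecidableEq ι]

/-- The partial derivative `∂_a h` of a function `h` on `ℝ^ι`. -/
noncomputable def pd (a : ι) (h : (ι → ℝ) → ℝ) (z : ι → ℝ) : ℝ :=
  fderiv ℝ h z (Pi.single a 1)

/-- The Christoffel symbol of the first kind
`Γ_{abc} = (∂_a g_{bc} + ∂_b g_{ac} - ∂_c g_{ab})/2`. -/
noncomputable def christoffelFst (g : (ι → ℝ) → Matrix ι ι ℝ) (a b c : ι) (z : ι → ℝ) : ℝ :=
  (pd a (fun w => g w b c) z + pd b (fun w => g w a c) z - pd c (fun w => g w a b) z) / 2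

/-- The Christoffel symbol of the second kind `Γ_{ab}^c = Σ_d g^{cd} Γ_{abd}`. -/
noncomputable def christoffelSnd (g : (ι → ℝ) → Matrix ι ι ℝ) (a b c : ι) (z : ι → ℝ) : ℝ :=
  ∑ d, (g z)⁻¹ c d * christoffelFst g a b d z

/-- The curvature operator components: `curvU g a b c e` is the `e`-component of
`R(∂_a,∂_b)∂_c = (∇_{∂_a}∇_{∂_b} - ∇_{∂_b}∇_{∂_a})∂_c`. -/
noncomputable def curvU (g : (ι → ℝ) → Matrix ι ι ℝ) (a b c e : ι) (z : ι → ℝ) : ℝ :=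
  pd a (christoffelSnd g b c e) z - pd b (christoffelSnd g a c e) z
    + ∑ f, (christoffelSnd g b c f z * christoffelSnd g a f e z
          - christoffelSnd g a c f z * christoffelSnd g b f e z)

/-- The Riemann curvature tensor `R(∂_a,∂_b,∂_c,∂_d) = g(R(∂_a,∂_b)∂_c, ∂_d)`. -/
noncomputable def curv (g : (ι → ℝ) → Matrix ι ι ℝ) (a b c d : ι) (z : ι → ℝ) : ℝ :=
  ∑ e, curvU g a b c e z * g z e d

/-- The covariant derivative `∇R(∂_a,∂_b,∂_c,∂_d;∂_e)` of the curvature tensor. -/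
noncomputable def curvCov (g : (ι → ℝ) → Matrix ι ι ℝ) (a b c d e : ι) (z : ι → ℝ) : ℝ :=
  pd e (curv g a b c d) z
  - ∑ f, christoffelSnd g e a f z * curv g f b c d z
  - ∑ f, christoffelSnd g e b f z * curv g a f c d z
  - ∑ f, christoffelSnd g e c f z * curv g a b f d z
  - ∑ f, christoffelSnd g e d f z * curv g a b c f z

end CoordinateGeometry

/-- Coordinate index type for `ℝ^{2r+2}`: `Sum.inl i ↦ u_{i+1}`, `Sum.inr (Sum.inl i) ↦ v_{i+1}`,
`Sum.inr (Sum.inr (Sum.inl _)) ↦ x`, `Sum.inr (Sum.inr (Sum.inr _)) ↦ y`. -/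
abbrev Idx3 (r : ℕ) := Fin r ⊕ Fin r ⊕ Unit ⊕ Unit

/-- The metric `g_{3,r,ψ}`: `g(∂_x,∂_y) = 1`, `g(∂_{u_i},∂_{v_j}) = δ_{ij}`, and
`g(∂_x,∂_x) = -2u_1v_2 - ... - 2u_{r-1}v_r - 2ψ(u_r)`. -/
noncomputable def metric3 (r : ℕ) (ψ : ℝ → ℝ) :
    (Idx3 r → ℝ) → Matrix (Idx3 r) (Idx3 r) ℝ :=
  fun z => Matrix.of fun a b =>
    match a, b with
    | Sum.inl i, Sum.inr (Sum.inl j) => if i = j then 1 else 0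
    | Sum.inr (Sum.inl i), Sum.inl j => if i = j then 1 else 0
    | Sum.inr (Sum.inr (Sum.inl _)), Sum.inr (Sum.inr (Sum.inr _)) => 1
    | Sum.inr (Sum.inr (Sum.inr _)), Sum.inr (Sum.inr (Sum.inl _)) => 1
    | Sum.inr (Sum.inr (Sum.inl _)), Sum.inr (Sum.inr (Sum.inl _)) =>
        (-2) * (∑ i : Fin r, if h : i.1 + 1 < r
            then z (Sum.inl i) * z (Sum.inr (Sum.inl ⟨i.1 + 1, h⟩)) else 0)
        - 2 * (if h : 0 < r then ψ (z (Sum.inl ⟨r - 1, Nat.sub_lt h Nat.one_pos⟩)) else 0)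
    | _, _ => 0

section PartialDerivatives

theorem pd_const {ι : Type*} [DecidableEq ι] (e : ι) (c : ℝ) (z : ι → ℝ) : pd e (fun _ => c) z = 0 := by
  simp [pd]

variable {ι : Type*} [Fintype ι] [DecidableEq ι]

theorem pd_linear_combination (e : ι) {A B C G : (ι → ℝ) → ℝ} (hA : Differentiable ℝ A)
    (hB : Differentiable ℝ B) (hC : Differentiable ℝ C) (hG : Differentiable ℝ G)
    (p q s t : ℝ) (z : ι → ℝ) :
    pd e (fun w => A w * p + B w * q + C w * s + G w * t) z
      = pd e A z * p + pd e B z * q + pd e C z * s + pd e G z * t := by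
  have h := ((((hA z).hasFDerivAt.mul_const p).add ((hB z).hasFDerivAt.mul_const q)).add
    ((hC z).hasFDerivAt.mul_const s)).add ((hG z).hasFDerivAt.mul_const t)
  have h' : HasFDerivAt (fun w => A w * p + B w * q + C w * s + G w * t) _ z := h
  simp only [pd, h'.fderiv]
  simp [mul_comm]

end PartialDerivatives

section PlaneWave

variable {ι : Type*} [Fintype ι] [DecidableEq ι]

/-- The components of the coordinate one-form dual to `∂_x`. -/
noncomputable def coordInd (x a : ι) : ℝ := if a = x then 1 else 0

/-- The metric `g₀ + F dx ⊗ dx`, where `g₀` pairs each coordinate `a` with `σ a`. -/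
noncomputable def waveMetric (σ : Equiv.Perm ι) (x : ι) (F : (ι → ℝ) → ℝ) (z : ι → ℝ) : Matrix ι ι ℝ :=
  Matrix.of fun a b => (if b = σ a then 1 else 0) + F z * (coordInd x a * coordInd x b)

variable {σ : Equiv.Perm ι} {x : ι} {F : (ι → ℝ) → ℝ} {D : ι → (ι → ℝ) → ℝ}
  {H : ι → ι → (ι → ℝ) → ℝ}

theorem waveMetric_inv (hσ : ∀ a, σ (σ a) = a) (hx : σ x ≠ x) (z : ι → ℝ) (a b : ι) :
    (waveMetric σ x F z)⁻¹ a b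
      = (if b = σ a then 1 else 0) - F z * (coordInd x (σ a) * coordInd x (σ b)) := by
  have hsymm : ∀ a b, σ a = b ↔ a = σ b := fun a b =>
    ⟨fun h => by rw [← h, hσ], fun h => by rw [h, hσ]⟩
  have key : waveMetric σ x F z * (Matrix.of fun a b =>
      (if b = σ a then 1 else 0) - F z * (coordInd x (σ a) * coordInd x (σ b))) = 1 := by
    ext a b
    rw [Matrix.mul_apply]
    have hX : ∀ c, coordInd x c * coordInd x (σ c) = 0 := fun c => by
      unfold coordInd
      by_cases h : c = x
      · simp [h, hx]
      · simp [h]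
    have hs : ∀ c, waveMetric σ x F z a c * (Matrix.of fun a b =>
        (if b = σ a then 1 else 0) - F z * (coordInd x (σ a) * coordInd x (σ b))) c b
        = (if c = σ a then ((if b = a then 1 else 0)
            - F z * (coordInd x a * coordInd x (σ b))) else 0)
          + (if c = σ b then F z * (coordInd x a * coordInd x (σ b)) else 0) := by
      intro c
      simp only [waveMetric, Matrix.of_apply]
      have h1 : (b = σ c) ↔ (c = σ b) := by rw [← hsymm, eq_comm]
      by_cases h : c = σ a <;> by_cases h' : c = σ b
      · have : b = a := σ.injective (h' ▸ h)
        subst this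
        subst h
        have := hX b
        simp only [hσ, if_true]
        linear_combination (-F z ^ 2 * coordInd x b * coordInd x (σ b)) * this
      · subst h
        have hba : b ≠ a := fun e => h' (by rw [e])
        simp only [hσ, if_true, hba, if_false, h']
        have := hX a
        linear_combination (-F z ^ 2 * coordInd x a * coordInd x (σ b)) * this
      · simp only [h', if_true, hσ]
        have := hX b
        rw [if_neg (fun e => h (by rw [h', e])), if_neg (fun e => h (by rw [h', e]))]
        linear_combination (-F z ^ 2 * coordInd x a * coordInd x (σ b)) * this
      · simp only [h1, h, h', if_false]
        linear_combination (-F z ^ 2 * coordInd x a * coordInd x (σ b)) * hX c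
    simp only [hs, Finset.sum_add_distrib, Finset.sum_ite_eq', Finset.mem_univ, if_true,
      Matrix.one_apply, eq_comm (a := a)]
    ring
  rw [Matrix.inv_eq_right_inv key, Matrix.of_apply]

theorem christoffelFst_waveMetric (hF : Differentiable ℝ F) (hD : ∀ a z, pd a F z = D a z)
    (a b c : ι) (z : ι → ℝ) :
    christoffelFst (waveMetric σ x F) a b c z
      = (D a z * (coordInd x b * coordInd x c) + D b z * (coordInd x a * coordInd x c)
        - D c z * (coordInd x a * coordInd x b)) / 2 := by
  have h : ∀ a b c, pd a (fun w => waveMetric σ x F w b c) z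
      = D a z * (coordInd x b * coordInd x c) := by
    intro a b c
    have h' : HasFDerivAt (fun w => waveMetric σ x F w b c) _ z :=
      ((hF z).hasFDerivAt.mul_const (coordInd x b * coordInd x c)).const_add _
    rw [← hD, pd, h'.fderiv]
    simp [pd, mul_comm]
  simp only [christoffelFst, h]

theorem christoffelSnd_waveMetric (hσ : ∀ a, σ (σ a) = a) (hx : σ x ≠ x)
    (hF : Differentiable ℝ F) (hD : ∀ a z, pd a F z = D a z) (hy : ∀ z, D (σ x) z = 0)
    (a b c : ι) :
    christoffelSnd (waveMetric σ x F) a b c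
      = fun z => D a z * (coordInd x b * coordInd x (σ c) / 2)
        + D b z * (coordInd x a * coordInd x (σ c) / 2)
        + D (σ c) z * (-(coordInd x a * coordInd x b) / 2) + 0 * 0 := by
  funext z
  have hs : ∀ d, (waveMetric σ x F z)⁻¹ c d * christoffelFst (waveMetric σ x F) a b d z
      = if d = σ c then christoffelFst (waveMetric σ x F) a b d z else 0 := by
    intro d
    rw [waveMetric_inv hσ hx]
    by_cases h : σ d = x
    · have hd : d = σ x := by rw [← h, hσ]
      have h0 : christoffelFst (waveMetric σ x F) a b d z = 0 := by
        rw [christoffelFst_waveMetric hF hD, hd, hy]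
        simp [coordInd, hx]
      simp [h0]
    · simp [coordInd, h]
  simp only [christoffelSnd, hs, Finset.sum_ite_eq', Finset.mem_univ, if_true]
  rw [christoffelFst_waveMetric hF hD]
  ring

theorem curv_waveMetric (hσ : ∀ a, σ (σ a) = a) (hx : σ x ≠ x)
    (hF : Differentiable ℝ F) (hD : ∀ a z, pd a F z = D a z) (hy : ∀ z, D (σ x) z = 0)
    (hDd : ∀ a, Differentiable ℝ (D a)) (hH : ∀ a b z, pd b (D a) z = H a b z)
    (hHs : ∀ a b z, H a b z = H b a z) (a b c d : ι) :
    curv (waveMetric σ x F) a b c d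
      = fun z => H b c z * (-(coordInd x a * coordInd x d) / 2)
        + H b d z * (coordInd x a * coordInd x c / 2)
        + H a c z * (coordInd x b * coordInd x d / 2)
        + H a d z * (-(coordInd x b * coordInd x c) / 2) := by
  funext z
  have hyx : ∀ a, H (σ x) a z = 0 := fun a => by
    rw [← hH, show D (σ x) = fun _ => 0 from funext hy, pd_const]
  have hU : ∀ e, curvU (waveMetric σ x F) a b c e z
      = H b c z * (-(coordInd x a * coordInd x (σ e)) / 2)
        + H b (σ e) z * (coordInd x a * coordInd x c / 2)
        + H a c z * (coordInd x b * coordInd x (σ e) / 2)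
        + H a (σ e) z * (-(coordInd x b * coordInd x c) / 2) := by
    intro e
    unfold curvU
    rw [Finset.sum_eq_zero, christoffelSnd_waveMetric hσ hx hF hD hy,
      christoffelSnd_waveMetric hσ hx hF hD hy,
      pd_linear_combination _ (hDd _) (hDd _) (hDd _) (differentiable_const 0),
      pd_linear_combination _ (hDd _) (hDd _) (hDd _) (differentiable_const 0)]
    · simp only [hH, hHs b a, hHs c, hHs (σ e)]
      ring
    · intro f _
      simp only [christoffelSnd_waveMetric hσ hx hF hD hy]
      by_cases h : f = x
      · subst h
        simp [coordInd, hx, hy]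
      by_cases h' : σ f = x
      · have hf : f = σ x := by rw [← h', hσ]
        subst hf
        simp [coordInd, hx, hy]
      · simp only [coordInd, h, h', if_false]
        ring
  have hs : ∀ e, curvU (waveMetric σ x F) a b c e z * waveMetric σ x F z e d
      = if e = σ d then curvU (waveMetric σ x F) a b c e z else 0 := by
    intro e
    have h1 : (d = σ e) ↔ (e = σ d) :=
      ⟨fun h => by rw [h, hσ], fun h => by rw [h, hσ]⟩
    by_cases h : e = x
    · have h0 : curvU (waveMetric σ x F) a b c e z = 0 := by
        rw [hU, h, hHs b (σ x), hHs a (σ x), hyx, hyx]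
        simp [coordInd, hx]
      simp [h0]
    · simp [waveMetric, coordInd, h, h1]
  simp only [curv, hs, Finset.sum_ite_eq', Finset.mem_univ, if_true]
  rw [hU, hσ]

theorem curvCov_waveMetric (hσ : ∀ a, σ (σ a) = a) (hx : σ x ≠ x)
    (hF : Differentiable ℝ F) (hD : ∀ a z, pd a F z = D a z) (hy : ∀ z, D (σ x) z = 0)
    (hDd : ∀ a, Differentiable ℝ (D a)) (hH : ∀ a b z, pd b (D a) z = H a b z)
    (hHs : ∀ a b z, H a b z = H b a z) (hHd : ∀ a b, Differentiable ℝ (H a b))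
    (a b c d e : ι) (z : ι → ℝ) :
    curvCov (waveMetric σ x F) a b c d e z
      = pd e (H b c) z * (-(coordInd x a * coordInd x d) / 2)
        + pd e (H b d) z * (coordInd x a * coordInd x c / 2)
        + pd e (H a c) z * (coordInd x b * coordInd x d / 2)
        + pd e (H a d) z * (-(coordInd x b * coordInd x c) / 2) := by
  have hyx : ∀ a, H (σ x) a z = 0 := fun a => by
    rw [← hH, show D (σ x) = fun _ => 0 from funext hy, pd_const]
  have hxy : ∀ a, H a (σ x) z = 0 := fun a => by rw [hHs, hyx]
  have hab : ∑ f, christoffelSnd (waveMetric σ x F) e a f z * curv (waveMetric σ x F) f b c d z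
      + ∑ f, christoffelSnd (waveMetric σ x F) e b f z * curv (waveMetric σ x F) a f c d z
      = 0 := by
    rw [← Finset.sum_add_distrib]
    refine Finset.sum_eq_zero fun f _ => ?_
    simp only [christoffelSnd_waveMetric hσ hx hF hD hy,
      curv_waveMetric hσ hx hF hD hy hDd hH hHs]
    by_cases h : f = x
    · subst h
      simp [coordInd, hx, hy]
    by_cases h' : σ f = x
    · have hf : f = σ x := by rw [← h', hσ]
      subst hf
      simp [coordInd, hx, hyx]
    · simp only [coordInd, h, h', if_false]
      ring
  have hcd : ∑ f, christoffelSnd (waveMetric σ x F) e c f z * curv (waveMetric σ x F) a b f d z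
      + ∑ f, christoffelSnd (waveMetric σ x F) e d f z * curv (waveMetric σ x F) a b c f z
      = 0 := by
    rw [← Finset.sum_add_distrib]
    refine Finset.sum_eq_zero fun f _ => ?_
    simp only [christoffelSnd_waveMetric hσ hx hF hD hy,
      curv_waveMetric hσ hx hF hD hy hDd hH hHs]
    by_cases h : f = x
    · subst h
      simp [coordInd, hx, hy]
    by_cases h' : σ f = x
    · have hf : f = σ x := by rw [← h', hσ]
      subst hf
      simp [coordInd, hx, hxy]
    · simp only [coordInd, h, h', if_false]
      ring
  have hpd := pd_linear_combination e (hHd b c) (hHd b d) (hHd a c) (hHd a d)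
    (-(coordInd x a * coordInd x d) / 2) (coordInd x a * coordInd x c / 2)
    (coordInd x b * coordInd x d / 2) (-(coordInd x b * coordInd x c) / 2) z
  rw [← curv_waveMetric hσ hx hF hD hy hDd hH hHs] at hpd
  unfold curvCov
  linear_combination hpd - hab - hcd

end PlaneWave

section Metric3

variable {r : ℕ}

/-- The involution `u_i ↔ v_i`, `x ↔ y` of the coordinates. -/
def idxSwap (r : ℕ) : Equiv.Perm (Idx3 r) where
  toFun
    | Sum.inl i => Sum.inr (Sum.inl i)
    | Sum.inr (Sum.inl i) => Sum.inl i
    | Sum.inr (Sum.inr (Sum.inl _)) => Sum.inr (Sum.inr (Sum.inr ()))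
    | Sum.inr (Sum.inr (Sum.inr _)) => Sum.inr (Sum.inr (Sum.inl ()))
  invFun
    | Sum.inl i => Sum.inr (Sum.inl i)
    | Sum.inr (Sum.inl i) => Sum.inl i
    | Sum.inr (Sum.inr (Sum.inl _)) => Sum.inr (Sum.inr (Sum.inr ()))
    | Sum.inr (Sum.inr (Sum.inr _)) => Sum.inr (Sum.inr (Sum.inl ()))
  left_inv a := by rcases a with i | i | i | i <;> rfl
  right_inv a := by rcases a with i | i | i | i <;> rfl

/-- The coordinate index `x`. -/
abbrev xIdx (r : ℕ) : Idx3 r := Sum.inr (Sum.inr (Sum.inl ()))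

/-- The function `-2u_1v_2 - ... - 2u_{r-1}v_r - 2φ(z_k)`. -/
noncomputable def waveProfile (k : Idx3 r) (φ : ℝ → ℝ) (z : Idx3 r → ℝ) : ℝ :=
  (-2) * (∑ i : Fin r, if h : i.1 + 1 < r
    then z (Sum.inl i) * z (Sum.inr (Sum.inl ⟨i.1 + 1, h⟩)) else 0) - 2 * φ (z k)

/-- The partial derivative of `waveProfile` along the coordinate `a`, with `φ₁` the derivative
of `φ`. -/
noncomputable def waveGrad (k : Idx3 r) (φ₁ : ℝ → ℝ) (a : Idx3 r) (z : Idx3 r → ℝ) : ℝ :=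
  (-2) * (∑ i : Fin r, if h : i.1 + 1 < r
    then z (Sum.inl i) * coordInd a (Sum.inr (Sum.inl ⟨i.1 + 1, h⟩))
      + z (Sum.inr (Sum.inl ⟨i.1 + 1, h⟩)) * coordInd a (Sum.inl i) else 0)
    - 2 * (φ₁ (z k) * coordInd a k)

/-- The second partial derivative of `waveProfile` along the coordinates `a` and `b`, with `φ₂`
the second derivative of `φ`. -/
noncomputable def waveHess (k : Idx3 r) (φ₂ : ℝ → ℝ) (a b : Idx3 r) (z : Idx3 r → ℝ) : ℝ :=
  (-2) * (∑ i : Fin r, if h : i.1 + 1 < r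
    then coordInd b (Sum.inl i) * coordInd a (Sum.inr (Sum.inl ⟨i.1 + 1, h⟩))
      + coordInd b (Sum.inr (Sum.inl ⟨i.1 + 1, h⟩)) * coordInd a (Sum.inl i) else 0)
    - 2 * (φ₂ (z k) * coordInd b k * coordInd a k)

theorem single_eq_coordInd {ι : Type*} [DecidableEq ι] (a b : ι) :
    (Pi.single a 1 : ι → ℝ) b = coordInd a b := by
  simp [Pi.single_apply, coordInd]

theorem hasFDerivAt_coord {ι : Type*} [Fintype ι] (k : ι) (z : ι → ℝ) :
    HasFDerivAt (fun w : ι → ℝ => w k) (ContinuousLinearMap.proj (R := ℝ) k) z :=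
  (ContinuousLinearMap.proj (R := ℝ) (φ := fun _ : ι => ℝ) k).hasFDerivAt

theorem hasFDerivAt_comp_coord {ι : Type*} [Fintype ι] {φ : ℝ → ℝ} (hφ : Differentiable ℝ φ)
    (k : ι) (z : ι → ℝ) :
    HasFDerivAt (fun w : ι → ℝ => φ (w k))
      (deriv φ (z k) • ContinuousLinearMap.proj (R := ℝ) (φ := fun _ : ι => ℝ) k) z :=
  (hφ (z k)).hasDerivAt.comp_hasFDerivAt z (hasFDerivAt_coord k z)

theorem hasFDerivAt_waveProfile {φ : ℝ → ℝ} (hφ : Differentiable ℝ φ) (k : Idx3 r)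
    (z : Idx3 r → ℝ) :
    ∃ L : (Idx3 r → ℝ) →L[ℝ] ℝ, HasFDerivAt (waveProfile k φ) L z ∧
      ∀ a, L (Pi.single a 1) = waveGrad k (deriv φ) a z := by
  have hs : ∀ i : Fin r, HasFDerivAt (fun w : Idx3 r → ℝ => if h : i.1 + 1 < r
      then w (Sum.inl i) * w (Sum.inr (Sum.inl ⟨i.1 + 1, h⟩)) else 0)
      (if h : i.1 + 1 < r then
        z (Sum.inl i) • ContinuousLinearMap.proj (R := ℝ) (φ := fun _ : Idx3 r => ℝ)
          (Sum.inr (Sum.inl ⟨i.1 + 1, h⟩))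
        + z (Sum.inr (Sum.inl ⟨i.1 + 1, h⟩)) •
          ContinuousLinearMap.proj (R := ℝ) (φ := fun _ : Idx3 r => ℝ) (Sum.inl i)
        else 0) z := by
    intro i
    by_cases h : i.1 + 1 < r
    · simp only [h, dif_pos]
      exact (hasFDerivAt_coord _ z).mul (hasFDerivAt_coord _ z)
    · simp only [h, dif_neg, not_false_eq_true]
      exact hasFDerivAt_const _ _
  have hL := ((HasFDerivAt.fun_sum fun i (_ : i ∈ Finset.univ) => hs i).const_mul (-2)).sub
    ((hasFDerivAt_comp_coord hφ k z).const_mul 2)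
  refine ⟨_, hL, fun a => ?_⟩
  simp only [waveGrad, sub_apply, smul_apply,
    sum_apply, smul_eq_mul, ContinuousLinearMap.proj_apply,
    single_eq_coordInd]
  congr 2
  refine Finset.sum_congr rfl fun i _ => ?_
  split_ifs <;> simp [coordInd, Pi.single_apply]

theorem hasFDerivAt_waveGrad {φ : ℝ → ℝ} (hφ : Differentiable ℝ φ) (k a : Idx3 r)
    (z : Idx3 r → ℝ) :
    ∃ L : (Idx3 r → ℝ) →L[ℝ] ℝ, HasFDerivAt (waveGrad k φ a) L z ∧
      ∀ b, L (Pi.single b 1) = waveHess k (deriv φ) a b z := by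
  have hs : ∀ i : Fin r, HasFDerivAt (fun w : Idx3 r → ℝ => if h : i.1 + 1 < r
      then w (Sum.inl i) * coordInd a (Sum.inr (Sum.inl ⟨i.1 + 1, h⟩))
      + w (Sum.inr (Sum.inl ⟨i.1 + 1, h⟩)) * coordInd a (Sum.inl i) else 0)
      (if h : i.1 + 1 < r then
        coordInd a (Sum.inr (Sum.inl ⟨i.1 + 1, h⟩)) •
          ContinuousLinearMap.proj (R := ℝ) (φ := fun _ : Idx3 r => ℝ) (Sum.inl i)
        + coordInd a (Sum.inl i) •
          ContinuousLinearMap.proj (R := ℝ) (φ := fun _ : Idx3 r => ℝ)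
            (Sum.inr (Sum.inl ⟨i.1 + 1, h⟩))
        else 0) z := by
    intro i
    by_cases h : i.1 + 1 < r
    · simp only [h, dif_pos]
      exact ((hasFDerivAt_coord _ z).mul_const _).add ((hasFDerivAt_coord _ z).mul_const _)
    · simp only [h, dif_neg, not_false_eq_true]
      exact hasFDerivAt_const _ _
  have hL := ((HasFDerivAt.fun_sum fun i (_ : i ∈ Finset.univ) => hs i).const_mul (-2)).sub
    (((hasFDerivAt_comp_coord hφ k z).mul_const (coordInd a k)).const_mul 2)
  refine ⟨_, hL, fun b => ?_⟩
  simp only [waveHess, sub_apply, smul_apply,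
    sum_apply, smul_eq_mul, ContinuousLinearMap.proj_apply,
    single_eq_coordInd]
  congr 2
  · refine Finset.sum_congr rfl fun i _ => ?_
    split_ifs
    · simp only [add_apply, smul_apply, smul_eq_mul, ContinuousLinearMap.proj_apply,
        single_eq_coordInd]
      ring
    · simp
  · ring

theorem hasFDerivAt_waveHess {φ : ℝ → ℝ} (hφ : Differentiable ℝ φ) (k a b : Idx3 r)
    (z : Idx3 r → ℝ) :
    ∃ L : (Idx3 r → ℝ) →L[ℝ] ℝ, HasFDerivAt (waveHess k φ a b) L z ∧
      ∀ c, L (Pi.single c 1)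
        = -2 * (deriv φ (z k) * (coordInd a k * coordInd b k * coordInd c k)) := by
  have hL := ((((hasFDerivAt_comp_coord hφ k z).mul_const (coordInd b k)).mul_const
    (coordInd a k)).const_mul 2).const_sub ((-2) * (∑ i : Fin r, if h : i.1 + 1 < r
      then coordInd b (Sum.inl i) * coordInd a (Sum.inr (Sum.inl ⟨i.1 + 1, h⟩))
        + coordInd b (Sum.inr (Sum.inl ⟨i.1 + 1, h⟩)) * coordInd a (Sum.inl i) else 0))
  refine ⟨_, hL, fun c => ?_⟩
  simp only [neg_apply, smul_apply, smul_eq_mul,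
    ContinuousLinearMap.proj_apply, single_eq_coordInd]
  ring

theorem waveHess_symm (k : Idx3 r) (φ : ℝ → ℝ) (a b : Idx3 r) (z : Idx3 r → ℝ) :
    waveHess k φ a b z = waveHess k φ b a z := by
  unfold waveHess
  congr 2
  · refine Finset.sum_congr rfl fun i _ => ?_
    split_ifs
    · ring
    · rfl
  · ring

theorem sum_superdiagonal (j l : Fin r) :
    (∑ i : Fin r, if h : i.1 + 1 < r then
      coordInd j i * coordInd l (⟨i.1 + 1, h⟩ : Fin r) else 0)
      = if l.1 = j.1 + 1 then 1 else 0 := by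
  rw [Finset.sum_eq_single j]
  · have hl := l.2
    by_cases h : l.1 = j.1 + 1
    · have hj : j.1 + 1 < r := by omega
      simp [coordInd, h, hj, Fin.ext_iff]
    · by_cases hj : j.1 + 1 < r
      · simp [coordInd, h, hj, Fin.ext_iff, eq_comm]
      · simp [h, hj]
  · intro i _ hi
    simp [coordInd, hi]
  · simp

theorem metric3_eq_waveMetric (hr : 0 < r) (ψ : ℝ → ℝ) :
    metric3 r ψ = waveMetric (idxSwap r) (xIdx r)
      (waveProfile (Sum.inl ⟨r - 1, Nat.sub_lt hr Nat.one_pos⟩) ψ) := by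
  funext z
  ext a b
  rcases a with i | i | i | i <;> rcases b with j | j | j | j <;>
    simp [metric3, waveMetric, idxSwap, coordInd, waveProfile, hr, eq_comm]

end Metric3

/-- Theorem 1.5 (3): the only nonzero components of `R` and `∇R` for `g_{3,r,ψ}` (up to the
`ℤ₂` curvature symmetries) are `R(∂_x,∂_{u_r},∂_{u_r},∂_x) = ψ''(u_r)`,
`R(∂_x,∂_{u_i},∂_{v_{i+1}},∂_x) = 1` for `1 ≤ i ≤ r-1`, and
`∇R(∂_x,∂_{u_r},∂_{u_r},∂_x;∂_{u_r}) = ψ'''(u_r)`.  This is expressed by giving the full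
tensors: `R(a,b,c,d) = S(b,c)X_aX_d - S(b,d)X_aX_c - S(a,c)X_bX_d + S(a,d)X_bX_c` where `S`
has components `S(∂_{u_r},∂_{u_r}) = ψ''(u_r)`, `S(∂_{u_i},∂_{v_{i+1}}) = 1`, and similarly
for `∇R` with `T(b,c,e) = ψ'''(u_r)` iff `b = c = e = ∂_{u_r}`. -/
theorem stmt14 (r : ℕ) (hr : 2 ≤ r) (ψ : ℝ → ℝ) (hψ : ContDiff ℝ (⊤ : ℕ∞) ψ) :
    ∀ z : Idx3 r → ℝ,
      let ur : Idx3 r := Sum.inl ⟨r - 1, by omega⟩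
      let S : Idx3 r → Idx3 r → ℝ := fun e f =>
        match e, f with
        | Sum.inl i, Sum.inl j =>
            if i.1 = r - 1 ∧ j.1 = r - 1 then deriv (deriv ψ) (z ur) else 0
        | Sum.inl i, Sum.inr (Sum.inl j) => if j.1 = i.1 + 1 then 1 else 0
        | Sum.inr (Sum.inl j), Sum.inl i => if j.1 = i.1 + 1 then 1 else 0
        | _, _ => 0
      let T : Idx3 r → Idx3 r → Idx3 r → ℝ := fun e f h =>
        if e = ur ∧ f = ur ∧ h = ur then deriv (deriv (deriv ψ)) (z ur) else 0
      let Xi : Idx3 r → ℝ := fun e =>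
        match e with | Sum.inr (Sum.inr (Sum.inl _)) => 1 | _ => 0
      (∀ a b c d : Idx3 r, curv (metric3 r ψ) a b c d z =
          S b c * Xi a * Xi d - S b d * Xi a * Xi c
          - S a c * Xi b * Xi d + S a d * Xi b * Xi c) ∧
      (∀ a b c d e : Idx3 r, curvCov (metric3 r ψ) a b c d e z =
          T b c e * Xi a * Xi d - T b d e * Xi a * Xi c
          - T a c e * Xi b * Xi d + T a d e * Xi b * Xi c) := by
  intro z ur S T Xi
  have h1 : Differentiable ℝ ψ := hψ.differentiable (by simp)
  have hψ1 : ContDiff ℝ (⊤ : ℕ∞) (deriv ψ) := (contDiff_infty_iff_deriv.1 hψ).2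
  have h2 : Differentiable ℝ (deriv ψ) := hψ1.differentiable (by simp)
  have hψ2 : ContDiff ℝ (⊤ : ℕ∞) (deriv (deriv ψ)) := (contDiff_infty_iff_deriv.1 hψ1).2
  have h3 : Differentiable ℝ (deriv (deriv ψ)) := hψ2.differentiable (by simp)
  have hσ : ∀ a, idxSwap r (idxSwap r a) = a := fun a => by
    rcases a with i | i | i | i <;> rfl
  have hx : idxSwap r (xIdx r) ≠ xIdx r := by simp [idxSwap]
  have hF : Differentiable ℝ (waveProfile ur ψ) := fun w => by
    obtain ⟨L, hL, -⟩ := hasFDerivAt_waveProfile h1 ur w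
    exact hL.differentiableAt
  have hD : ∀ a w, pd a (waveProfile ur ψ) w = waveGrad ur (deriv ψ) a w := fun a w => by
    obtain ⟨L, hL, h⟩ := hasFDerivAt_waveProfile h1 ur w
    rw [pd, hL.fderiv, h]
  have hDd : ∀ a, Differentiable ℝ (waveGrad ur (deriv ψ) a) := fun a w => by
    obtain ⟨L, hL, -⟩ := hasFDerivAt_waveGrad h2 ur a w
    exact hL.differentiableAt
  have hH : ∀ a b w, pd b (waveGrad ur (deriv ψ) a) w = waveHess ur (deriv (deriv ψ)) a b w :=
    fun a b w => by
      obtain ⟨L, hL, h⟩ := hasFDerivAt_waveGrad h2 ur a w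
      rw [pd, hL.fderiv, h]
  have hHd : ∀ a b, Differentiable ℝ (waveHess ur (deriv (deriv ψ)) a b) := fun a b w => by
    obtain ⟨L, hL, -⟩ := hasFDerivAt_waveHess h3 ur a b w
    exact hL.differentiableAt
  have hK : ∀ a b c, pd c (waveHess ur (deriv (deriv ψ)) a b) z = -2 * T a b c :=
    fun a b c => by
      obtain ⟨L, hL, h⟩ := hasFDerivAt_waveHess h3 ur a b z
      rw [pd, hL.fderiv, h]
      simp only [T, coordInd, eq_comm (a := ur)]
      by_cases ha : a = ur <;> by_cases hb : b = ur <;> by_cases hc : c = ur <;>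
        simp [ha, hb, hc]
  have hHs := waveHess_symm ur (deriv (deriv ψ))
  have hy : ∀ w, waveGrad ur (deriv ψ) (idxSwap r (xIdx r)) w = 0 := fun w => by
    simp [waveGrad, coordInd, idxSwap, ur]
  have hXi : ∀ a, coordInd (xIdx r) a = Xi a := fun a => by
    rcases a with i | i | i | i <;> simp [coordInd, Xi]
  have hS : ∀ a b, waveHess ur (deriv (deriv ψ)) a b z = -2 * S a b := by
    have huv : ∀ i j : Fin r, waveHess ur (deriv (deriv ψ)) (Sum.inl i) (Sum.inr (Sum.inl j)) z
        = -2 * (if j.1 = i.1 + 1 then 1 else 0) := fun i j => by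
      rw [← sum_superdiagonal]
      simp [waveHess, coordInd, ur, and_comm, ← ite_and]
    intro a b
    rcases a with i | i | i | i <;> rcases b with j | j | j | j
    · simp only [waveHess, coordInd, ur, S]
      by_cases hi : i.1 = r - 1 <;> by_cases hj : j.1 = r - 1 <;>
        simp [Fin.ext_iff, eq_comm, hi, hj]
    · exact huv i j
    case inr.inl.inl => exact (hHs _ _ z).trans (huv j i)
    all_goals simp [waveHess, coordInd, ur, S]
  rw [metric3_eq_waveMetric (by omega : 0 < r)]
  refine ⟨fun a b c d => ?_, fun a b c d e => ?_⟩
  · rw [curv_waveMetric hσ hx hF hD hy hDd hH hHs]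
    simp only [hS, hXi]
    ring
  · rw [curvCov_waveMetric hσ hx hF hD hy hDd hH hHs hHd]
    simp only [hK, hXi]
    ring
end

section
/- Let M be a pseudo-Riemannian manifold with ∇R = 0 such that exp_P : T_PM → M is a diffeomorphism for every P ∈ M. Then for any two points P, Q ∈ M there exists an isometry of M taking P to Q (the geodesic symmetry about the midpoint of the geodesic from P to Q); hence M is a homogeneous space. -/
section TensorCalculus

theorem eq_zero_of_hasDerivAt_tower {h : ℕ → ℕ → ℝ → ℝ} {M C T : ℝ}
    (hh : ∀ p q t, HasDerivAt (h p q) (h (p + 1) q t + h p (q + 1) t) t)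
    (h0 : ∀ p q, h p q 0 = 0)
    (hb : ∀ p q, ∀ t ∈ Set.Icc 0 T, |h p q t| ≤ M * C ^ (p + q)) :
    ∀ p q, ∀ t ∈ Set.Icc 0 T, h p q t = 0 := by
  have key : ∀ k : ℕ, ∀ p q, ∀ t ∈ Set.Icc 0 T,
      |h p q t| ≤ M * C ^ (p + q) * ((2 * C * t) ^ k / k.factorial) := by
    intro k
    induction k with
    | zero => simpa using hb
    | succ k ih =>
      intro p q
      have := image_norm_le_of_norm_deriv_right_le_deriv_boundary (f := h p q)
        (f' := fun t => h (p + 1) q t + h p (q + 1) t) (a := 0) (b := T)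
        (B := fun t => M * C ^ (p + q) * ((2 * C * t) ^ (k + 1) / (k + 1).factorial))
        (B' := fun t => M * C ^ (p + q) * (2 * C) * ((2 * C * t) ^ k / k.factorial))
        (fun t _ => (hh p q t).continuousAt.continuousWithinAt)
        (fun t _ => (hh p q t).hasDerivWithinAt) (by simp [h0])
        (fun t => by
          have h1 := (((hasDerivAt_id t).const_mul (2 * C)).pow (k + 1)).div_const
            ((k + 1).factorial : ℝ) |>.const_mul (M * C ^ (p + q))
          refine h1.congr_deriv ?_
          have : (k.factorial : ℝ) ≠ 0 := by positivity
          have : (k + 1 : ℝ) ≠ 0 := by positivity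
          simp only [Nat.factorial_succ, id, Nat.add_sub_cancel]
          push_cast
          field_simp)
        (fun t ht => by
          have ht' : t ∈ Set.Icc 0 T := ⟨ht.1, ht.2.le⟩
          have e1 := ih (p + 1) q t ht'
          have e2 := ih p (q + 1) t ht'
          have e3 : C ^ (p + 1 + q) = C ^ (p + q) * C := by ring
          have e4 : C ^ (p + (q + 1)) = C ^ (p + q) * C := by ring
          rw [e3] at e1
          rw [e4] at e2
          refine (norm_add_le _ _).trans ?_
          simp only [Real.norm_eq_abs]
          linarith)
      intro t ht
      exact this ht
  intro p q t ht
  have hlim := (FloorSemiring.tendsto_pow_div_factorial_atTop (2 * C * t)).const_mul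
    (M * C ^ (p + q))
  rw [mul_zero] at hlim
  exact abs_nonpos_iff.1 (ge_of_tendsto' hlim fun k => key k p q t ht)

theorem apply_neg_of_hasDerivAt_tower {f : ℕ → ℕ → ℝ → ℝ}
    (hf : ∀ p q t, HasDerivAt (f p q) (f (p + 1) q t + f p (q + 1) t) t)
    (h0 : ∀ p q, Odd (p + q) → f p q 0 = 0)
    (hb : ∀ T, ∃ M C, ∀ p q, ∀ t ∈ Set.Icc (-T) T, |f p q t| ≤ M * C ^ (p + q))
    {t : ℝ} (ht : 0 ≤ t) : f 0 0 (-t) = f 0 0 t := by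
  obtain ⟨M, C, hMC⟩ := hb t
  have := eq_zero_of_hasDerivAt_tower (h := fun p q s => f p q s - (-1) ^ (p + q) * f p q (-s))
    (M := 2 * M) (C := C) (T := t)
    (fun p q s => by
      have h1 := (hf p q s).sub ((((hf p q (-s)).scomp s (hasDerivAt_neg s))).const_mul
        ((-1) ^ (p + q)))
      refine h1.congr_deriv ?_
      simp only [smul_eq_mul]
      ring)
    (fun p q => by
      rcases Nat.even_or_odd (p + q) with h | h
      · simp [h.neg_one_pow]
      · simp [h0 p q h])
    (fun p q s hs => by
      have e1 := hMC p q s ⟨by linarith [hs.1], hs.2⟩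
      have e2 := hMC p q (-s) ⟨by linarith [hs.2], by linarith [hs.1]⟩
      refine (abs_sub _ _).trans ?_
      rw [abs_mul, abs_pow, abs_neg, abs_one, one_pow, one_mul]
      linarith) 0 0 t ⟨ht, le_rfl⟩
  simp only [add_zero, pow_zero, one_mul] at this
  linarith

variable {ι : Type*} [Fintype ι]
  {D : Type*} [NormedAddCommGroup D] [NormedSpace ℝ D]

/-- The bilinear map with coefficients `k a b`. -/
noncomputable def bilinOfCoeff (k : ι → ι → D) : (ι → ℝ) →ₗ[ℝ] (ι → ℝ) →ₗ[ℝ] D :=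
  ∑ a, ∑ b, (LinearMap.proj a : (ι → ℝ) →ₗ[ℝ] ℝ).smulRight
    ((LinearMap.proj b : (ι → ℝ) →ₗ[ℝ] ℝ).smulRight (k a b))

/-- The trilinear map with coefficients `k a b c`. -/
noncomputable def trilinOfCoeff (k : ι → ι → ι → D) :
    (ι → ℝ) →ₗ[ℝ] (ι → ℝ) →ₗ[ℝ] (ι → ℝ) →ₗ[ℝ] D :=
  ∑ a, (LinearMap.proj a : (ι → ℝ) →ₗ[ℝ] ℝ).smulRight (bilinOfCoeff (k a))

theorem bilinOfCoeff_apply (k : ι → ι → D) (u v : ι → ℝ) :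
    bilinOfCoeff k u v = ∑ a, ∑ b, u a • v b • k a b := by
  simp [bilinOfCoeff]

theorem trilinOfCoeff_apply (k : ι → ι → ι → D) (u v w : ι → ℝ) :
    trilinOfCoeff k u v w = ∑ a, u a • bilinOfCoeff (k a) v w := by
  simp [trilinOfCoeff]

theorem bilinOfCoeff_single [DecidableEq ι] (k : ι → ι → D) (a b : ι) :
    bilinOfCoeff k (Pi.single a 1) (Pi.single b 1) = k a b := by
  simp [bilinOfCoeff_apply, Pi.single_apply]

theorem trilinOfCoeff_single [DecidableEq ι] (k : ι → ι → ι → D) (a b c : ι) :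
    trilinOfCoeff k (Pi.single a 1) (Pi.single b 1) (Pi.single c 1) = k a b c := by
  simp [trilinOfCoeff_apply, bilinOfCoeff_single, Pi.single_apply]

theorem hasDerivAt_bilinOfCoeff {k : ℝ → ι → ι → D} {k' : ι → ι → D} {u v : ℝ → ι → ℝ}
    {u' v' : ι → ℝ}
    {t : ℝ} (hk : ∀ a b, HasDerivAt (fun s => k s a b) (k' a b) t) (hu : HasDerivAt u u' t)
    (hv : HasDerivAt v v' t) :
    HasDerivAt (fun s => bilinOfCoeff (k s) (u s) (v s))
      (bilinOfCoeff k' (u t) (v t) + bilinOfCoeff (k t) u' (v t) + bilinOfCoeff (k t) (u t) v')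
      t := by
  simp only [bilinOfCoeff_apply, ← Finset.sum_add_distrib]
  refine HasDerivAt.fun_sum fun a _ => HasDerivAt.fun_sum fun b _ => ?_
  refine ((hasDerivAt_pi.1 hu a).smul ((hasDerivAt_pi.1 hv b).smul (hk a b))).congr_deriv ?_
  rw [smul_add]
  abel

theorem hasDerivAt_trilinOfCoeff {k : ℝ → ι → ι → ι → D} {k' : ι → ι → ι → D} {u v w : ℝ → ι → ℝ}
    {u' v' w' : ι → ℝ} {t : ℝ} (hk : ∀ a b c, HasDerivAt (fun s => k s a b c) (k' a b c) t)
    (hu : HasDerivAt u u' t) (hv : HasDerivAt v v' t) (hw : HasDerivAt w w' t) :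
    HasDerivAt (fun s => trilinOfCoeff (k s) (u s) (v s) (w s))
      (trilinOfCoeff k' (u t) (v t) (w t) + trilinOfCoeff (k t) u' (v t) (w t)
        + trilinOfCoeff (k t) (u t) v' (w t) + trilinOfCoeff (k t) (u t) (v t) w') t := by
  simp only [trilinOfCoeff_apply, ← Finset.sum_add_distrib]
  refine HasDerivAt.fun_sum fun a _ => ?_
  refine ((hasDerivAt_pi.1 hu a).smul (hasDerivAt_bilinOfCoeff (hk a) hv hw)).congr_deriv ?_
  rw [smul_add, smul_add]
  abel

/-- `B'` is the derivative of the field of bilinear maps `B`. -/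
def IsDerivOfBilin (B : (ι → ℝ) → (ι → ℝ) →ₗ[ℝ] (ι → ℝ) →ₗ[ℝ] D)
    (B' : (ι → ℝ) → (ι → ℝ) → (ι → ℝ) →ₗ[ℝ] (ι → ℝ) →ₗ[ℝ] D) : Prop :=
  ∀ ⦃γ u v : ℝ → ι → ℝ⦄ ⦃γ' u' v' : ι → ℝ⦄ ⦃t : ℝ⦄, HasDerivAt γ γ' t → HasDerivAt u u' t →
    HasDerivAt v v' t → HasDerivAt (fun s => B (γ s) (u s) (v s))
      (B' (γ t) γ' (u t) (v t) + B (γ t) u' (v t) + B (γ t) (u t) v') t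

/-- `B'` is the derivative of the field of trilinear maps `B`. -/
def IsDerivOfTrilin (B : (ι → ℝ) → (ι → ℝ) →ₗ[ℝ] (ι → ℝ) →ₗ[ℝ] (ι → ℝ) →ₗ[ℝ] D)
    (B' : (ι → ℝ) → (ι → ℝ) → (ι → ℝ) →ₗ[ℝ] (ι → ℝ) →ₗ[ℝ] (ι → ℝ) →ₗ[ℝ] D) : Prop :=
  ∀ ⦃γ u v w : ℝ → ι → ℝ⦄ ⦃γ' u' v' w' : ι → ℝ⦄ ⦃t : ℝ⦄, HasDerivAt γ γ' t → HasDerivAt u u' t →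
    HasDerivAt v v' t → HasDerivAt w w' t → HasDerivAt (fun s => B (γ s) (u s) (v s) (w s))
      (B' (γ t) γ' (u t) (v t) (w t) + B (γ t) u' (v t) (w t) + B (γ t) (u t) v' (w t)
        + B (γ t) (u t) (v t) w') t

theorem isDerivOfBilin_bilinOfCoeff {k : ι → ι → (ι → ℝ) → D}
    (hk : ∀ a b, Differentiable ℝ (k a b)) :
    IsDerivOfBilin (fun z => bilinOfCoeff fun a b => k a b z)
      (fun z e => bilinOfCoeff fun a b => fderiv ℝ (k a b) z e) := fun _ _ _ _ _ _ t hγ hu hv =>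
  hasDerivAt_bilinOfCoeff (fun a b => (hk a b _).hasFDerivAt.comp_hasDerivAt t hγ) hu hv

theorem isDerivOfTrilin_trilinOfCoeff {k : ι → ι → ι → (ι → ℝ) → D}
    (hk : ∀ a b c, Differentiable ℝ (k a b c)) :
    IsDerivOfTrilin (fun z => trilinOfCoeff fun a b c => k a b c z)
      (fun z e => trilinOfCoeff fun a b c => fderiv ℝ (k a b c) z e) :=
  fun _ _ _ _ _ _ _ _ t hγ hu hv hw =>
    hasDerivAt_trilinOfCoeff (fun a b c => (hk a b c _).hasFDerivAt.comp_hasDerivAt t hγ) hu hv hw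

theorem LinearMap.norm_apply_le_sum_single [DecidableEq ι] (L : (ι → ℝ) →ₗ[ℝ] D) (w : ι → ℝ) :
    ‖L w‖ ≤ (∑ i, ‖L (Pi.single i 1)‖) * ‖w‖ := by
  have hw : L w = ∑ i, w i • L (Pi.single i 1) := by
    conv_lhs => rw [pi_eq_sum_univ' w]
    simp
  rw [hw, Finset.sum_mul]
  refine (norm_sum_le _ _).trans (Finset.sum_le_sum fun i _ => ?_)
  rw [norm_smul, mul_comm]
  gcongr
  exact norm_le_pi_norm w i

theorem LinearMap.norm_apply₂_le_sum_single [DecidableEq ι]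
    (L : (ι → ℝ) →ₗ[ℝ] (ι → ℝ) →ₗ[ℝ] D) (v w : ι → ℝ) :
    ‖L v w‖ ≤ (∑ i, ∑ j, ‖L (Pi.single i 1) (Pi.single j 1)‖) * ‖v‖ * ‖w‖ := by
  refine ((L v).norm_apply_le_sum_single w).trans ?_
  gcongr
  rw [Finset.sum_comm, Finset.sum_mul]
  exact Finset.sum_le_sum fun j _ => (L.flip (Pi.single j 1)).norm_apply_le_sum_single v

theorem LinearMap.exists_bound_of_continuous {L : ℝ → (ι → ℝ) →ₗ[ℝ] D}
    (hL : ∀ w, Continuous fun t => L t w) (T : ℝ) :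
    ∃ C, ∀ t ∈ Set.Icc (-T) T, ∀ w, ‖L t w‖ ≤ C * ‖w‖ := by
  classical
  obtain ⟨C, hC⟩ := (isCompact_Icc (a := -T) (b := T)).exists_bound_of_continuousOn
    (f := fun t => ∑ i, ‖L t (Pi.single i 1)‖)
    (continuous_finsetSum _ fun i _ => (hL _).norm).continuousOn
  refine ⟨C, fun t ht w => ((L t).norm_apply_le_sum_single w).trans ?_⟩
  gcongr
  exact (le_abs_self _).trans (hC t ht)

theorem LinearMap.exists_bound₂_of_continuous {L : ℝ → (ι → ℝ) →ₗ[ℝ] (ι → ℝ) →ₗ[ℝ] D}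
    (hL : ∀ v w, Continuous fun t => L t v w) (T : ℝ) :
    ∃ C, 0 ≤ C ∧ ∀ t ∈ Set.Icc (-T) T, ∀ v w, ‖L t v w‖ ≤ C * ‖v‖ * ‖w‖ := by
  classical
  obtain ⟨C, hC⟩ := (isCompact_Icc (a := -T) (b := T)).exists_bound_of_continuousOn
    (f := fun t => ∑ i, ∑ j, ‖L t (Pi.single i 1) (Pi.single j 1)‖)
    (continuous_finsetSum _ fun i _ => continuous_finsetSum _ fun j _ =>
      (hL _ _).norm).continuousOn
  refine ⟨max 0 C, le_max_left _ _, fun t ht v w =>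
    ((L t).norm_apply₂_le_sum_single v w).trans ?_⟩
  gcongr
  exact ((le_abs_self _).trans (hC t ht)).trans (le_max_right _ _)

theorem continuous_of_forall_hasDerivAt {f f' : ℝ → D} (h : ∀ t, HasDerivAt f (f' t) t) :
    Continuous f :=
  continuous_iff_continuousAt.2 fun t => (h t).continuousAt

/-- The iterated covariant derivatives of a Jacobi field `J` with covariant derivative `Y` along a
geodesic with velocity `X`, when the curvature tensor `Rm` is parallel. -/
noncomputable def jacobiTower
    (Rm : (ι → ℝ) → (ι → ℝ) →ₗ[ℝ] (ι → ℝ) →ₗ[ℝ] (ι → ℝ) →ₗ[ℝ] (ι → ℝ)) (γ X J Y : ℝ → ι → ℝ) :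
    ℕ → ℝ → (ι → ℝ)
  | 0 => J
  | 1 => Y
  | n + 2 => fun t => Rm (γ t) (X t) (jacobiTower Rm γ X J Y n t) (X t)

variable {Γ : (ι → ℝ) → (ι → ℝ) →ₗ[ℝ] (ι → ℝ) →ₗ[ℝ] (ι → ℝ)}
  {G : (ι → ℝ) → (ι → ℝ) →ₗ[ℝ] (ι → ℝ) →ₗ[ℝ] ℝ}
  {Rm : (ι → ℝ) → (ι → ℝ) →ₗ[ℝ] (ι → ℝ) →ₗ[ℝ] (ι → ℝ) →ₗ[ℝ] (ι → ℝ)}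
  {Γ' : (ι → ℝ) → (ι → ℝ) → (ι → ℝ) →ₗ[ℝ] (ι → ℝ) →ₗ[ℝ] (ι → ℝ)}
  {G' : (ι → ℝ) → (ι → ℝ) → (ι → ℝ) →ₗ[ℝ] (ι → ℝ) →ₗ[ℝ] ℝ}
  {Rm' : (ι → ℝ) → (ι → ℝ) → (ι → ℝ) →ₗ[ℝ] (ι → ℝ) →ₗ[ℝ] (ι → ℝ) →ₗ[ℝ] (ι → ℝ)}
  {γ X J Y J₁ Y₁ J₂ Y₂ : ℝ → ι → ℝ}

theorem hasDerivAt_jacobiTower (hRm' : IsDerivOfTrilin Rm Rm')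
    (hcov : ∀ z e a b c, Rm' z e a b c + Γ z e (Rm z a b c) - Rm z (Γ z e a) b c
      - Rm z a (Γ z e b) c - Rm z a b (Γ z e c) = 0)
    (hγ : ∀ t, HasDerivAt γ (X t) t)
    (hX : ∀ t, HasDerivAt X (-Γ (γ t) (X t) (X t)) t)
    (hJ : ∀ t, HasDerivAt J (Y t - Γ (γ t) (X t) (J t)) t)
    (hY : ∀ t, HasDerivAt Y (Rm (γ t) (X t) (J t) (X t) - Γ (γ t) (X t) (Y t)) t) (n : ℕ) (t : ℝ) :
    HasDerivAt (jacobiTower Rm γ X J Y n) (jacobiTower Rm γ X J Y (n + 1) t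
      - Γ (γ t) (X t) (jacobiTower Rm γ X J Y n t)) t := by
  induction n using Nat.twoStepInduction with
  | zero => exact hJ t
  | one => exact hY t
  | more n ih _ =>
    refine (hRm' (hγ t) (hX t) ih (hX t)).congr_deriv ?_
    have h2 := hcov (γ t) (X t) (X t) (jacobiTower Rm γ X J Y n t) (X t)
    simp only [jacobiTower, map_sub, map_neg, LinearMap.sub_apply, LinearMap.neg_apply]
    rw [← sub_eq_zero, ← h2]
    abel

theorem exists_norm_jacobiTower_le
    (hR : ∀ w, Continuous fun t => Rm (γ t) (X t) w (X t))
    (hJ : Continuous J) (hY : Continuous Y) (T : ℝ) :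
    ∃ N C, 0 ≤ N ∧ 1 ≤ C ∧ ∀ n, ∀ t ∈ Set.Icc (-T) T,
      ‖jacobiTower Rm γ X J Y n t‖ ≤ N * C ^ n := by
  have hc : IsCompact (Set.Icc (-T) T) := isCompact_Icc
  obtain ⟨A, hA⟩ := LinearMap.exists_bound_of_continuous
    (L := fun t => (Rm (γ t) (X t)).flip (X t)) hR T
  obtain ⟨N₁, hN₁⟩ := hc.exists_bound_of_continuousOn hJ.continuousOn
  obtain ⟨N₂, hN₂⟩ := hc.exists_bound_of_continuousOn hY.continuousOn
  set N := max 0 (max N₁ N₂)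
  set C := max 1 A
  have hN : 0 ≤ N := le_max_left _ _
  have hC : 1 ≤ C := le_max_left _ _
  refine ⟨N, C, hN, hC, fun n t ht => ?_⟩
  induction n using Nat.twoStepInduction with
  | zero =>
    have h1 : ‖J t‖ ≤ N := (hN₁ t ht).trans ((le_max_left _ _).trans (le_max_right _ _))
    rwa [pow_zero, mul_one]
  | one =>
    have h1 : ‖Y t‖ ≤ N := (hN₂ t ht).trans ((le_max_right _ _).trans (le_max_right _ _))
    rw [pow_one]
    exact h1.trans (le_mul_of_one_le_right hN hC)
  | more n ih _ =>
    set w := jacobiTower Rm γ X J Y n t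
    calc ‖Rm (γ t) (X t) w (X t)‖ ≤ A * ‖w‖ := hA t ht w
      _ ≤ C * (N * C ^ n) := by gcongr; exact le_max_right _ _
      _ ≤ C * (N * C ^ n) * C := le_mul_of_one_le_right (by positivity) hC
      _ = N * C ^ (n + 2) := by ring

theorem metric_jacobi_even (hG' : IsDerivOfBilin G G')
    (hG : ∀ z e a b, G' z e a b = G z (Γ z e a) b + G z a (Γ z e b))
    (hRm' : IsDerivOfTrilin Rm Rm')
    (hcov : ∀ z e a b c, Rm' z e a b c + Γ z e (Rm z a b c) - Rm z (Γ z e a) b c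
      - Rm z a (Γ z e b) c - Rm z a b (Γ z e c) = 0)
    (hγ : ∀ t, HasDerivAt γ (X t) t)
    (hX : ∀ t, HasDerivAt X (-Γ (γ t) (X t) (X t)) t)
    (hJ₁ : ∀ t, HasDerivAt J₁ (Y₁ t - Γ (γ t) (X t) (J₁ t)) t)
    (hY₁ : ∀ t, HasDerivAt Y₁ (Rm (γ t) (X t) (J₁ t) (X t) - Γ (γ t) (X t) (Y₁ t)) t)
    (hJ₂ : ∀ t, HasDerivAt J₂ (Y₂ t - Γ (γ t) (X t) (J₂ t)) t)
    (hY₂ : ∀ t, HasDerivAt Y₂ (Rm (γ t) (X t) (J₂ t) (X t) - Γ (γ t) (X t) (Y₂ t)) t)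
    (hJ₁0 : J₁ 0 = 0) (hJ₂0 : J₂ 0 = 0) {t : ℝ} (ht : 0 ≤ t) :
    G (γ (-t)) (J₁ (-t)) (J₂ (-t)) = G (γ t) (J₁ t) (J₂ t) := by
  have tower_even : ∀ (J Y : ℝ → ι → ℝ), J 0 = 0 →
      ∀ n, Even n → jacobiTower Rm γ X J Y n 0 = 0 := by
    intro J Y hJ n
    induction n using Nat.twoStepInduction with
    | zero => exact fun _ => hJ
    | one => simp
    | more n ih _ =>
      intro hn
      have : Even n := by simpa [Nat.even_add] using hn
      simp [jacobiTower, ih this]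
  have hRc : ∀ w, Continuous fun t => Rm (γ t) (X t) w (X t) := fun w =>
    continuous_of_forall_hasDerivAt fun t => hRm' (hγ t) (hX t) (hasDerivAt_const t w) (hX t)
  refine apply_neg_of_hasDerivAt_tower
    (f := fun p q s => G (γ s) (jacobiTower Rm γ X J₁ Y₁ p s) (jacobiTower Rm γ X J₂ Y₂ q s))
    (fun p q s => ?_) (fun p q hpq => ?_) (fun T => ?_) ht
  · refine (hG' (hγ s) (hasDerivAt_jacobiTower hRm' hcov hγ hX hJ₁ hY₁ p s)
      (hasDerivAt_jacobiTower hRm' hcov hγ hX hJ₂ hY₂ q s)).congr_deriv ?_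
    simp only [map_sub, LinearMap.sub_apply, hG]
    abel
  · rcases Nat.even_or_odd p with hp | hp
    · simp [tower_even J₁ Y₁ hJ₁0 p hp]
    · have hq : Even q := by
        by_contra hq
        exact (Nat.not_even_iff_odd.2 hpq) (hp.add_odd (Nat.not_even_iff_odd.1 hq))
      simp [tower_even J₂ Y₂ hJ₂0 q hq]
  · obtain ⟨N₁, C₁, hN₁, hC₁, h₁⟩ := exists_norm_jacobiTower_le hRc
      (continuous_of_forall_hasDerivAt hJ₁) (continuous_of_forall_hasDerivAt hY₁) T
    obtain ⟨N₂, C₂, hN₂, hC₂, h₂⟩ := exists_norm_jacobiTower_le hRc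
      (continuous_of_forall_hasDerivAt hJ₂) (continuous_of_forall_hasDerivAt hY₂) T
    obtain ⟨A, hA0, hA⟩ := LinearMap.exists_bound₂_of_continuous (L := fun t => G (γ t))
      (fun v w => continuous_of_forall_hasDerivAt fun t =>
        hG' (hγ t) (hasDerivAt_const t v) (hasDerivAt_const t w)) T
    refine ⟨A * N₁ * N₂, max C₁ C₂, fun p q s hs => ?_⟩
    have hC : 0 ≤ C₁ := zero_le_one.trans hC₁
    have hC' : 0 ≤ C₂ := zero_le_one.trans hC₂
    rw [← Real.norm_eq_abs]
    calc _ ≤ A * ‖jacobiTower Rm γ X J₁ Y₁ p s‖ * ‖jacobiTower Rm γ X J₂ Y₂ q s‖ := hA s hs _ _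
      _ ≤ A * (N₁ * C₁ ^ p) * (N₂ * C₂ ^ q) := by
          have e2 := h₁ p s hs
          have e3 := h₂ q s hs
          gcongr
      _ ≤ A * (N₁ * max C₁ C₂ ^ p) * (N₂ * max C₁ C₂ ^ q) := by
          gcongr
          · exact le_max_left _ _
          · exact le_max_right _ _
      _ = A * N₁ * N₂ * max C₁ C₂ ^ (p + q) := by ring

theorem fderiv_apply_comm {f : ℝ × ℝ → D} (hf : ContDiff ℝ (⊤ : ℕ∞) f) (e e' : ℝ × ℝ) :
    (fun p => fderiv ℝ (fun q => fderiv ℝ f q e) p e')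
      = fun p => fderiv ℝ (fun q => fderiv ℝ f q e') p e := by
  have hf1 : ContDiff ℝ (⊤ : ℕ∞) (fderiv ℝ f) := hf.fderiv_right (by simp)
  funext p
  have h : ∀ d, HasFDerivAt (fun q => fderiv ℝ f q d) ((fderiv ℝ (fderiv ℝ f) p).flip d) p :=
    fun d => by
      simpa using ((hf1.differentiable (by simp) p).hasFDerivAt.clm_apply (hasFDerivAt_const d p))
  rw [(h e).fderiv, (h e').fderiv, ContinuousLinearMap.flip_apply, ContinuousLinearMap.flip_apply]
  refine hf.contDiffAt.isSymmSndFDerivAt ?_ e' e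
  simpa using WithTop.coe_le_coe.2 (le_top : (2 : ℕ∞) ≤ ⊤)

/-- The pullback of the metric under an exponential map is invariant under `v ↦ -v`. -/
theorem metric_exp_neg (hΓ' : IsDerivOfBilin Γ Γ') (hΓs : ∀ z a b, Γ z a b = Γ z b a)
    (hΓs' : ∀ z e a b, Γ' z e a b = Γ' z e b a) (hG' : IsDerivOfBilin G G')
    (hG : ∀ z e a b, G' z e a b = G z (Γ z e a) b + G z a (Γ z e b))
    (hRm' : IsDerivOfTrilin Rm Rm')
    (hR : ∀ z a b c, Rm z a b c = Γ' z a b c - Γ' z b a c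
      + (Γ z a (Γ z b c) - Γ z b (Γ z a c)))
    (hcov : ∀ z e a b c, Rm' z e a b c + Γ z e (Rm z a b c) - Rm z (Γ z e a) b c
      - Rm z a (Γ z e b) c - Rm z a b (Γ z e c) = 0)
    {E : (ι → ℝ) → (ι → ℝ)} (hE : ContDiff ℝ (⊤ : ℕ∞) E)
    (hgeo : ∀ (v : ι → ℝ) (t : ℝ), HasDerivAt (fun s : ℝ => fderiv ℝ E (s • v) v)
      (-Γ (E (t • v)) (fderiv ℝ E (t • v) v) (fderiv ℝ E (t • v) v)) t) (v u₁ u₂ : ι → ℝ) :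
    G (E (-v)) (fderiv ℝ E (-v) u₁) (fderiv ℝ E (-v) u₂)
      = G (E v) (fderiv ℝ E v u₁) (fderiv ℝ E v u₂) := by
  have hEd : ∀ x, HasFDerivAt E (fderiv ℝ E x) x := fun x =>
    (hE.differentiable (by simp) x).hasFDerivAt
  have hray : ∀ (w : ι → ℝ) (t : ℝ), HasDerivAt (fun s : ℝ => s • w) w t := fun w t => by
    simpa using (hasDerivAt_id t).smul_const w
  have hγ : ∀ (w : ι → ℝ) (t : ℝ), HasDerivAt (fun s : ℝ => E (s • w)) (fderiv ℝ E (t • w) w) t :=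
    fun w t => (hEd (t • w)).comp_hasDerivAt t (hray w t)
  have smooth_fderiv : ∀ {f : ℝ × ℝ → ι → ℝ} (e), ContDiff ℝ (⊤ : ℕ∞) f →
      ContDiff ℝ (⊤ : ℕ∞) fun p => fderiv ℝ f p e := fun e hf =>
    (hf.fderiv_right (by simp)).clm_apply contDiff_const
  have dt : ∀ {f : ℝ × ℝ → ι → ℝ} (s t : ℝ), ContDiff ℝ (⊤ : ℕ∞) f →
      HasDerivAt (fun r => f (r, s)) (fderiv ℝ f (t, s) (1, 0)) t := fun s t hf =>
    (hf.differentiable (by simp) (t, s)).hasFDerivAt.comp_hasDerivAt t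
      ((hasDerivAt_id t).prodMk (hasDerivAt_const t s))
  have ds : ∀ {f : ℝ × ℝ → ι → ℝ} (s t : ℝ), ContDiff ℝ (⊤ : ℕ∞) f →
      HasDerivAt (fun r => f (t, r)) (fderiv ℝ f (t, s) (0, 1)) s := fun s t hf =>
    (hf.differentiable (by simp) (t, s)).hasFDerivAt.comp_hasDerivAt s
      ((hasDerivAt_const s t).prodMk (hasDerivAt_id s))
  have jacobi : ∀ u : (ι → ℝ), ∃ Y : ℝ → (ι → ℝ),
      (∀ t : ℝ, HasDerivAt (fun s : ℝ => fderiv ℝ E (s • v) (s • u))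
        (Y t - Γ (E (t • v)) (fderiv ℝ E (t • v) v) (fderiv ℝ E (t • v) (t • u))) t) ∧
      ∀ t : ℝ, HasDerivAt Y (Rm (E (t • v)) (fderiv ℝ E (t • v) v) (fderiv ℝ E (t • v) (t • u))
        (fderiv ℝ E (t • v) v) - Γ (E (t • v)) (fderiv ℝ E (t • v) v) (Y t)) t := by
    intro u
    set c : ℝ × ℝ → (ι → ℝ) := fun p => E (p.1 • (v + p.2 • u)) with hc
    have hcs : ContDiff ℝ (⊤ : ℕ∞) c := hE.comp
      (contDiff_fst.smul (contDiff_const.add (contDiff_snd.smul contDiff_const)))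
    set X : ℝ × ℝ → (ι → ℝ) := fun p => fderiv ℝ c p (1, 0) with hX
    set J : ℝ × ℝ → (ι → ℝ) := fun p => fderiv ℝ c p (0, 1) with hJ
    have hXs : ContDiff ℝ (⊤ : ℕ∞) X := smooth_fderiv _ hcs
    have hJs : ContDiff ℝ (⊤ : ℕ∞) J := smooth_fderiv _ hcs
    set J' : ℝ × ℝ → (ι → ℝ) := fun p => fderiv ℝ J p (1, 0) with hJ'
    have hJ's : ContDiff ℝ (⊤ : ℕ∞) J' := smooth_fderiv _ hJs
    have hXeq : ∀ t s, X (t, s) = fderiv ℝ E (t • (v + s • u)) (v + s • u) := fun t s =>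
      (dt s t hcs).unique (hγ (v + s • u) t)
    have hJeq : ∀ t, J (t, 0) = fderiv ℝ E (t • v) (t • u) := fun t => by
      have h1 : HasDerivAt (fun s : ℝ => t • (v + s • u)) (t • u) 0 :=
        ((hray u 0).const_add v).const_smul t
      have h2 := (hEd (t • (v + (0 : ℝ) • u))).comp_hasDerivAt (0 : ℝ) h1
      simpa using (ds 0 t hcs).unique h2
    have hXgeo : ∀ t s, fderiv ℝ X (t, s) (1, 0) = -Γ (c (t, s)) (X (t, s)) (X (t, s)) := by
      intro t s
      have h1 := dt s t hXs
      simp only [hXeq] at h1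
      rw [h1.unique (hgeo (v + s • u) t), hXeq]
    have hcomm : (fun p => fderiv ℝ X p (0, 1)) = J' := fderiv_apply_comm hcs _ _
    have hJ'' : ∀ t, fderiv ℝ J' (t, 0) (1, 0) = -(Γ' (c (t, 0)) (J (t, 0)) (X (t, 0)) (X (t, 0))
        + Γ (c (t, 0)) (J' (t, 0)) (X (t, 0)) + Γ (c (t, 0)) (X (t, 0)) (J' (t, 0))) := by
      intro t
      rw [← hcomm]
      have h1 := congrFun (fderiv_apply_comm hXs (0, 1) (1, 0)) (t, 0)
      refine h1.trans ?_
      have h2 := (ds 0 t (smooth_fderiv (1, 0) hXs)).congr_of_eventuallyEq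
        (.of_forall fun s => (hXgeo t s).symm)
      have h3 := ds 0 t hXs
      exact h2.unique (hΓ' (ds 0 t hcs) h3 h3).neg
    refine ⟨fun t => J' (t, 0) + Γ (c (t, 0)) (X (t, 0)) (J (t, 0)), fun t => ?_, fun t => ?_⟩
    · have h1 := dt 0 t hJs
      simp only [hJeq] at h1
      refine h1.congr_deriv ?_
      simp [hJ', hXeq, hJeq, hc]
    · refine ((dt 0 t hJ's).add (hΓ' (dt 0 t hcs) (dt 0 t hXs) (dt 0 t hJs))).congr_deriv ?_
      have h1 : fderiv ℝ c (t, 0) (1, 0) = X (t, 0) := rfl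
      have h2 : fderiv ℝ J (t, 0) (1, 0) = J' (t, 0) := rfl
      have h3 : E (t • v) = c (t, 0) := by simp [hc]
      have h4 : fderiv ℝ E (t • v) v = X (t, 0) := by simp [hXeq]
      rw [hJ'', h1, h2, h3, h4, ← hJeq, hR, hXgeo, hΓs _ (J' (t, 0)),
        hΓs' _ (X (t, 0)) (X (t, 0)) (J (t, 0)), hΓs _ (J (t, 0)) (Γ _ _ _),
        hΓs _ (J (t, 0)) (X (t, 0))]
      simp only [map_neg, map_add, LinearMap.neg_apply]
      abel
  obtain ⟨Y₁, hJ₁, hY₁⟩ := jacobi u₁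
  obtain ⟨Y₂, hJ₂, hY₂⟩ := jacobi u₂
  have := metric_jacobi_even hG' hG hRm' hcov (hγ v) (hgeo v) hJ₁ hY₁ hJ₂ hY₂
    (by simp) (by simp) zero_le_one
  simpa using this

theorem bilinOfCoeff_comm {k : ι → ι → D} (hk : ∀ a b, k a b = k b a) (u v : ι → ℝ) :
    bilinOfCoeff k u v = bilinOfCoeff k v u := by
  rw [bilinOfCoeff_apply, bilinOfCoeff_apply, Finset.sum_comm]
  refine Finset.sum_congr rfl fun a _ => Finset.sum_congr rfl fun b _ => ?_
  rw [hk b a, smul_comm]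

/-- The metric as a field of bilinear maps. -/
noncomputable def metricMap (g : (ι → ℝ) → Matrix ι ι ℝ) (z : ι → ℝ) :
    (ι → ℝ) →ₗ[ℝ] (ι → ℝ) →ₗ[ℝ] ℝ :=
  bilinOfCoeff fun a b => g z a b

theorem metricMap_apply (g : (ι → ℝ) → Matrix ι ι ℝ) (z u v : ι → ℝ) :
    metricMap g z u v = ∑ a, ∑ b, g z a b * u a * v b := by
  rw [metricMap, bilinOfCoeff_apply]
  refine Finset.sum_congr rfl fun a _ => Finset.sum_congr rfl fun b _ => ?_
  simp only [smul_eq_mul]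
  ring

theorem hasDerivAt_smul_curve {E : (ι → ℝ) → (ι → ℝ)} (hE : ContDiff ℝ (⊤ : ℕ∞) E) (v : ι → ℝ)
    (t : ℝ) : HasDerivAt (fun s : ℝ => E (s • v)) (fderiv ℝ E (t • v) v) t :=
  ((hE.differentiable (by simp) _).hasFDerivAt).comp_hasDerivAt t
    (by simpa using (hasDerivAt_id t).smul_const v)

variable [DecidableEq ι]

theorem fderiv_apply_eq_sum_single (f : (ι → ℝ) → D) (z e : ι → ℝ) :
    fderiv ℝ f z e = ∑ c, e c • fderiv ℝ f z (Pi.single c 1) := by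
  conv_lhs => rw [pi_eq_sum_univ' e]
  simp

/-- The derivative of a field of bilinear maps, as a trilinear map. -/
noncomputable def bilinDeriv (k : ι → ι → (ι → ℝ) → D) (z : ι → ℝ) :
    (ι → ℝ) →ₗ[ℝ] (ι → ℝ) →ₗ[ℝ] (ι → ℝ) →ₗ[ℝ] D :=
  trilinOfCoeff fun c a b => fderiv ℝ (k a b) z (Pi.single c 1)

/-- The derivative of a field of trilinear maps, as a quadrilinear map. -/
noncomputable def trilinDeriv (k : ι → ι → ι → (ι → ℝ) → D) (z : ι → ℝ) :
    (ι → ℝ) →ₗ[ℝ] (ι → ℝ) →ₗ[ℝ] (ι → ℝ) →ₗ[ℝ] (ι → ℝ) →ₗ[ℝ] D :=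
  ∑ d, (LinearMap.proj d : (ι → ℝ) →ₗ[ℝ] ℝ).smulRight
    (trilinOfCoeff fun a b c => fderiv ℝ (k a b c) z (Pi.single d 1))

theorem bilinDeriv_apply (k : ι → ι → (ι → ℝ) → D) (z e : ι → ℝ) :
    bilinDeriv k z e = bilinOfCoeff fun a b => fderiv ℝ (k a b) z e := by
  refine LinearMap.ext fun u => LinearMap.ext fun v => ?_
  simp only [bilinDeriv, trilinOfCoeff_apply, bilinOfCoeff_apply,
    fderiv_apply_eq_sum_single _ z e, Finset.smul_sum]
  rw [Finset.sum_comm]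
  refine Finset.sum_congr rfl fun a _ => ?_
  rw [Finset.sum_comm]
  refine Finset.sum_congr rfl fun b _ => Finset.sum_congr rfl fun c _ => ?_
  simp only [smul_smul]
  congr 1
  ring

theorem trilinDeriv_apply (k : ι → ι → ι → (ι → ℝ) → D) (z e : ι → ℝ) :
    trilinDeriv k z e = trilinOfCoeff fun a b c => fderiv ℝ (k a b c) z e := by
  refine LinearMap.ext fun u => ?_
  have h : ∀ a, (bilinOfCoeff fun b c => fderiv ℝ (k a b c) z e)
      = ∑ d, e d • bilinOfCoeff fun b c => fderiv ℝ (k a b c) z (Pi.single d 1) := fun a => by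
    rw [← bilinDeriv_apply]
    simp [bilinDeriv, trilinOfCoeff]
  refine LinearMap.ext fun v => LinearMap.ext fun w => ?_
  simp only [trilinDeriv, trilinOfCoeff_apply, h, LinearMap.sum_apply, LinearMap.smulRight_apply,
    LinearMap.smul_apply, Finset.smul_sum, LinearMap.proj_apply]
  rw [Finset.sum_comm]
  refine Finset.sum_congr rfl fun a _ => Finset.sum_congr rfl fun d _ => ?_
  rw [smul_comm]

theorem isDerivOfBilin_bilinDeriv {k : ι → ι → (ι → ℝ) → D}
    (hk : ∀ a b, Differentiable ℝ (k a b)) :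
    IsDerivOfBilin (fun z => bilinOfCoeff fun a b => k a b z) (fun z e => bilinDeriv k z e) := by
  simpa only [bilinDeriv_apply] using isDerivOfBilin_bilinOfCoeff hk

theorem isDerivOfTrilin_trilinDeriv {k : ι → ι → ι → (ι → ℝ) → D}
    (hk : ∀ a b c, Differentiable ℝ (k a b c)) :
    IsDerivOfTrilin (fun z => trilinOfCoeff fun a b c => k a b c z)
      (fun z e => trilinDeriv k z e) := by
  simpa only [trilinDeriv_apply] using isDerivOfTrilin_trilinOfCoeff hk

theorem IsLinearMap.ext_single {F₁ F₂ : (ι → ℝ) → D} (h₁ : IsLinearMap ℝ F₁)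
    (h₂ : IsLinearMap ℝ F₂) (h : ∀ a, F₁ (Pi.single a 1) = F₂ (Pi.single a 1)) (v : ι → ℝ) :
    F₁ v = F₂ v := by
  have : h₁.mk' F₁ = h₂.mk' F₂ := by
    refine LinearMap.pi_ext' fun a => LinearMap.ext_ring ?_
    simpa using h a
  exact congrArg (fun L : (ι → ℝ) →ₗ[ℝ] D => L v) this

theorem contDiff_pd {h : (ι → ℝ) → ℝ} (hh : ContDiff ℝ (⊤ : ℕ∞) h) (a : ι) :
    ContDiff ℝ (⊤ : ℕ∞) (pd a h) :=
  (hh.fderiv_right (by simp)).clm_apply contDiff_const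

theorem contDiff_det {A : (ι → ℝ) → Matrix ι ι ℝ}
    (hA : ∀ a b, ContDiff ℝ (⊤ : ℕ∞) fun z => A z a b) :
    ContDiff ℝ (⊤ : ℕ∞) fun z => (A z).det := by
  simp only [Matrix.det_apply]
  exact ContDiff.sum fun σ _ => (contDiff_prod fun i _ => hA _ _).const_smul _

theorem contDiff_nonsing_inv_apply {A : (ι → ℝ) → Matrix ι ι ℝ}
    (hA : ∀ a b, ContDiff ℝ (⊤ : ℕ∞) fun z => A z a b) (hu : ∀ z, IsUnit (A z)) (a b : ι) :
    ContDiff ℝ (⊤ : ℕ∞) fun z => (A z)⁻¹ a b := by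
  have hdet : ∀ z, (A z).det ≠ 0 := fun z => ((Matrix.isUnit_iff_isUnit_det _).1 (hu z)).ne_zero
  simp only [Matrix.inv_def, Matrix.smul_apply, Ring.inverse_eq_inv', smul_eq_mul,
    Matrix.adjugate_apply]
  refine ((contDiff_det hA).inv hdet).mul (contDiff_det fun i j => ?_)
  by_cases hi : i = b
  · subst hi
    simpa using contDiff_const
  · simpa [Matrix.updateRow_apply, hi] using hA i j

variable {g : (ι → ℝ) → Matrix ι ι ℝ}

theorem contDiff_christoffelFst (hg : ∀ a b, ContDiff ℝ (⊤ : ℕ∞) fun z => g z a b) (a b c : ι) :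
    ContDiff ℝ (⊤ : ℕ∞) (christoffelFst g a b c) :=
  (((contDiff_pd (hg b c) a).add (contDiff_pd (hg a c) b)).sub (contDiff_pd (hg a b) c)).div_const _

theorem contDiff_christoffelSnd (hg : ∀ a b, ContDiff ℝ (⊤ : ℕ∞) fun z => g z a b)
    (hu : ∀ z, IsUnit (g z)) (a b c : ι) : ContDiff ℝ (⊤ : ℕ∞) (christoffelSnd g a b c) :=
  ContDiff.sum fun d _ =>
    (contDiff_nonsing_inv_apply hg hu c d).mul (contDiff_christoffelFst hg a b d)

theorem contDiff_curvU (hg : ∀ a b, ContDiff ℝ (⊤ : ℕ∞) fun z => g z a b)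
    (hu : ∀ z, IsUnit (g z)) (a b c e : ι) : ContDiff ℝ (⊤ : ℕ∞) (curvU g a b c e) := by
  have h := contDiff_christoffelSnd hg hu
  exact ((contDiff_pd (h b c e) a).sub (contDiff_pd (h a c e) b)).add
    (ContDiff.sum fun f _ => ((h b c f).mul (h a f e)).sub ((h a c f).mul (h b f e)))

theorem christoffelFst_comm (hgsym : ∀ z a b, g z a b = g z b a) (a b c : ι) (z : ι → ℝ) :
    christoffelFst g a b c z = christoffelFst g b a c z := by
  simp only [christoffelFst, hgsym _ a b]
  ring

theorem christoffelSnd_comm (hgsym : ∀ z a b, g z a b = g z b a) (a b c : ι) :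
    christoffelSnd g a b c = christoffelSnd g b a c := by
  funext z
  simp only [christoffelSnd, christoffelFst_comm hgsym a b]

theorem sum_christoffelSnd_mul (hgsym : ∀ z a b, g z a b = g z b a) (hu : ∀ z, IsUnit (g z))
    (a b c : ι) (z : ι → ℝ) :
    ∑ f, christoffelSnd g a b f z * g z f c = christoffelFst g a b c z := by
  have h : ∀ d, ∑ f, g z c f * (g z)⁻¹ f d = if c = d then 1 else 0 := fun d => by
    rw [← Matrix.mul_apply, Matrix.mul_nonsing_inv _ ((Matrix.isUnit_iff_isUnit_det _).1 (hu z)),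
      Matrix.one_apply]
  simp only [christoffelSnd, Finset.sum_mul]
  rw [Finset.sum_comm]
  calc _ = ∑ d, (∑ f, g z c f * (g z)⁻¹ f d) * christoffelFst g a b d z := by
        refine Finset.sum_congr rfl fun d _ => ?_
        rw [Finset.sum_mul]
        refine Finset.sum_congr rfl fun f _ => ?_
        rw [hgsym z f c]
        ring
    _ = _ := by simp [h]

/-- The metric is parallel. -/
theorem pd_metric (hgsym : ∀ z a b, g z a b = g z b a) (hu : ∀ z, IsUnit (g z))
    (a b c : ι) (z : ι → ℝ) :
    pd c (fun w => g w a b) z = ∑ f, christoffelSnd g c a f z * g z f b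
      + ∑ f, christoffelSnd g c b f z * g z a f := by
  simp only [hgsym z a]
  rw [sum_christoffelSnd_mul hgsym hu, sum_christoffelSnd_mul hgsym hu, christoffelFst,
    christoffelFst, show (fun w => g w b a) = fun w => g w a b from funext fun w => hgsym w b a]
  ring

theorem pd_sum_mul {h₁ h₂ : ι → (ι → ℝ) → ℝ} (a : ι) (H₁ : ∀ e, Differentiable ℝ (h₁ e))
    (H₂ : ∀ e, Differentiable ℝ (h₂ e)) (z : ι → ℝ) :
    pd a (fun w => ∑ e, h₁ e w * h₂ e w) z
      = ∑ e, (pd a (h₁ e) z * h₂ e z + h₁ e z * pd a (h₂ e) z) := by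
  have h := HasFDerivAt.fun_sum (u := Finset.univ) fun e _ =>
    (H₁ e z).hasFDerivAt.fun_mul (H₂ e z).hasFDerivAt
  rw [pd, h.fderiv]
  simp only [sum_apply, add_apply, smul_apply, smul_eq_mul, pd]
  exact Finset.sum_congr rfl fun e _ => by ring

/-- If the fully covariant curvature tensor is parallel, so is the curvature operator. -/
theorem curvU_parallel (hgsym : ∀ z a b, g z a b = g z b a) (hu : ∀ z, IsUnit (g z))
    (hg : ∀ a b, ContDiff ℝ (⊤ : ℕ∞) fun z => g z a b)
    (hflat : ∀ (a b c d e : ι) (z : ι → ℝ), curvCov g a b c d e z = 0)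
    (a b c e h : ι) (z : ι → ℝ) :
    pd e (curvU g a b c h) z + ∑ f, curvU g a b c f z * christoffelSnd g e f h z
      - ∑ f, christoffelSnd g e a f z * curvU g f b c h z
      - ∑ f, christoffelSnd g e b f z * curvU g a f c h z
      - ∑ f, christoffelSnd g e c f z * curvU g a b f h z = 0 := by
  set T : ι → ℝ := fun h =>
    pd e (curvU g a b c h) z + ∑ f, curvU g a b c f z * christoffelSnd g e f h z
      - ∑ f, christoffelSnd g e a f z * curvU g f b c h z
      - ∑ f, christoffelSnd g e b f z * curvU g a f c h z
      - ∑ f, christoffelSnd g e c f z * curvU g a b f h z with hT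
  suffices hT0 : T = 0 from congrFun hT0 h
  refine Matrix.vecMul_injective_of_isUnit (hu z) ?_
  change Matrix.vecMul T (g z) = Matrix.vecMul 0 (g z)
  rw [Matrix.zero_vecMul]
  funext d
  have hd := hflat a b c d e z
  have swap : ∀ (p : ι → ℝ) (q : ι → ι → ℝ), ∑ f, p f * ∑ i, q f i * g z i d
      = ∑ i, (∑ f, p f * q f i) * g z i d := fun p q => by
    simp only [Finset.mul_sum, Finset.sum_mul]
    rw [Finset.sum_comm]
    simp only [mul_assoc]
  have swap' : ∑ f, christoffelSnd g e d f z * ∑ i, curvU g a b c i z * g z i f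
      = ∑ i, curvU g a b c i z * ∑ f, christoffelSnd g e d f z * g z i f := by
    simp only [Finset.mul_sum]
    rw [Finset.sum_comm]
    exact Finset.sum_congr rfl fun i _ => Finset.sum_congr rfl fun f _ => by ring
  have hpd : pd e (curv g a b c d) z = _ := pd_sum_mul e
    (fun i => (contDiff_curvU hg hu a b c i).differentiable (by simp))
    (fun i => (hg i d).differentiable (by simp)) z
  rw [curvCov, hpd] at hd
  simp only [pd_metric hgsym hu, curv, swap, swap', mul_add, Finset.sum_add_distrib] at hd
  simp only [Matrix.vecMul, dotProduct, hT, sub_mul, add_mul, Finset.sum_sub_distrib,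
    Finset.sum_add_distrib, Pi.zero_apply]
  rw [← hd]
  ring

/-- The Christoffel symbols as a field of bilinear maps. -/
noncomputable def christoffelMap (g : (ι → ℝ) → Matrix ι ι ℝ) (z : ι → ℝ) :
    (ι → ℝ) →ₗ[ℝ] (ι → ℝ) →ₗ[ℝ] (ι → ℝ) :=
  bilinOfCoeff fun a b c => christoffelSnd g a b c z

/-- The curvature operator as a field of trilinear maps. -/
noncomputable def curvMap (g : (ι → ℝ) → Matrix ι ι ℝ) (z : ι → ℝ) :
    (ι → ℝ) →ₗ[ℝ] (ι → ℝ) →ₗ[ℝ] (ι → ℝ) →ₗ[ℝ] (ι → ℝ) :=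
  trilinOfCoeff fun a b c e => curvU g a b c e z

theorem fderiv_single_apply {f : (ι → ℝ) → ι → ℝ} {z : ι → ℝ}
    (hf : ∀ e, DifferentiableAt ℝ (fun w => f w e) z) (a e : ι) :
    fderiv ℝ f z (Pi.single a 1) e = pd a (fun w => f w e) z := by
  rw [fderiv_pi hf]
  rfl

theorem differentiable_christoffelSnd_pi (hg : ∀ a b, ContDiff ℝ (⊤ : ℕ∞) fun z => g z a b)
    (hu : ∀ z, IsUnit (g z)) (a b : ι) :
    Differentiable ℝ fun z c => christoffelSnd g a b c z :=
  differentiable_pi.2 fun c => (contDiff_christoffelSnd hg hu a b c).differentiable (by simp)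

theorem differentiable_curvU_pi (hg : ∀ a b, ContDiff ℝ (⊤ : ℕ∞) fun z => g z a b)
    (hu : ∀ z, IsUnit (g z)) (a b c : ι) :
    Differentiable ℝ fun z e => curvU g a b c e z :=
  differentiable_pi.2 fun e => (contDiff_curvU hg hu a b c e).differentiable (by simp)

theorem bilinOfCoeff_single_left (k : ι → ι → D) (a : ι) (v : ι → ℝ) :
    bilinOfCoeff k (Pi.single a 1) v = ∑ f, v f • k a f := by
  simp [bilinOfCoeff_apply, Pi.single_apply]

theorem trilinOfCoeff_apply_single_single (k : ι → ι → ι → D) (v : ι → ℝ) (b c : ι) :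
    trilinOfCoeff k v (Pi.single b 1) (Pi.single c 1) = ∑ f, v f • k f b c := by
  simp [trilinOfCoeff_apply, bilinOfCoeff_single]

theorem trilinOfCoeff_single_apply_single (k : ι → ι → ι → D) (v : ι → ℝ) (a c : ι) :
    trilinOfCoeff k (Pi.single a 1) v (Pi.single c 1) = ∑ f, v f • k a f c := by
  simp [trilinOfCoeff_apply, bilinOfCoeff_apply, Pi.single_apply]

theorem trilinOfCoeff_single_single_apply (k : ι → ι → ι → D) (v : ι → ℝ) (a b : ι) :
    trilinOfCoeff k (Pi.single a 1) (Pi.single b 1) v = ∑ f, v f • k a b f := by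
  simp [trilinOfCoeff_apply, bilinOfCoeff_single_left, Pi.single_apply]

theorem metricMap_parallel (hgsym : ∀ z a b, g z a b = g z b a) (hu : ∀ z, IsUnit (g z))
    (z e a b : ι → ℝ) :
    bilinDeriv (fun a b z => g z a b) z e a b
      = metricMap g z (christoffelMap g z e a) b + metricMap g z a (christoffelMap g z e b) := by
  revert e
  refine IsLinearMap.ext_single (by constructor <;> simp)
    (by constructor <;> simp <;> intros <;> ring) fun c => ?_
  revert a
  refine IsLinearMap.ext_single (by constructor <;> simp)
    (by constructor <;> simp <;> intros <;> ring) fun a => ?_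
  revert b
  refine IsLinearMap.ext_single (by constructor <;> simp)
    (by constructor <;> simp <;> intros <;> ring) fun b => ?_
  rw [bilinDeriv, trilinOfCoeff_single, metricMap, christoffelMap, bilinOfCoeff_single,
    bilinOfCoeff_single, bilinOfCoeff_single_left, bilinOfCoeff_comm fun _ _ => hgsym _ _ _,
    bilinOfCoeff_single_left]
  refine (pd_metric hgsym hu a b c z).trans ?_
  simp only [smul_eq_mul, hgsym z b]

theorem curvMap_eq (hg : ∀ a b, ContDiff ℝ (⊤ : ℕ∞) fun z => g z a b)
    (hu : ∀ z, IsUnit (g z)) (z a b c : ι → ℝ) :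
    curvMap g z a b c = bilinDeriv (fun a b z c => christoffelSnd g a b c z) z a b c
      - bilinDeriv (fun a b z c => christoffelSnd g a b c z) z b a c
      + (christoffelMap g z a (christoffelMap g z b c)
        - christoffelMap g z b (christoffelMap g z a c)) := by
  revert a
  refine IsLinearMap.ext_single (by constructor <;> simp)
    (by constructor <;> simp <;> intros <;> module) fun a => ?_
  revert b
  refine IsLinearMap.ext_single (by constructor <;> simp)
    (by constructor <;> simp <;> intros <;> module) fun b => ?_
  revert c
  refine IsLinearMap.ext_single (by constructor <;> simp)
    (by constructor <;> simp <;> intros <;> module) fun c => ?_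
  have hd := fun a b z c => differentiable_pi.1 (differentiable_christoffelSnd_pi hg hu a b) c z
  funext e
  simp only [curvMap, christoffelMap, bilinDeriv, trilinOfCoeff_single, bilinOfCoeff_single]
  simp only [bilinOfCoeff_single_left, curvU, Pi.add_apply, Pi.sub_apply, Finset.sum_apply,
    Pi.smul_apply, smul_eq_mul, fderiv_single_apply (hd _ _ _), Finset.sum_sub_distrib]

theorem curvMap_parallel (hgsym : ∀ z a b, g z a b = g z b a) (hu : ∀ z, IsUnit (g z))
    (hg : ∀ a b, ContDiff ℝ (⊤ : ℕ∞) fun z => g z a b)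
    (hflat : ∀ (a b c d e : ι) (z : ι → ℝ), curvCov g a b c d e z = 0) (z e a b c : ι → ℝ) :
    trilinDeriv (fun a b c z e => curvU g a b c e z) z e a b c
      + christoffelMap g z e (curvMap g z a b c)
      - curvMap g z (christoffelMap g z e a) b c - curvMap g z a (christoffelMap g z e b) c
      - curvMap g z a b (christoffelMap g z e c) = 0 := by
  have hz : IsLinearMap ℝ fun _ : ι → ℝ => (0 : ι → ℝ) := by constructor <;> simp
  revert e
  refine IsLinearMap.ext_single (by constructor <;> simp <;> intros <;> module) hz fun e => ?_
  revert a
  refine IsLinearMap.ext_single (by constructor <;> simp <;> intros <;> module) hz fun a => ?_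
  revert b
  refine IsLinearMap.ext_single (by constructor <;> simp <;> intros <;> module) hz fun b => ?_
  revert c
  refine IsLinearMap.ext_single (by constructor <;> simp <;> intros <;> module) hz fun c => ?_
  have hd := fun a b c z e => differentiable_pi.1 (differentiable_curvU_pi hg hu a b c) e z
  have h4 : trilinDeriv (fun a b c z e => curvU g a b c e z) z (Pi.single e 1) (Pi.single a 1)
      (Pi.single b 1) (Pi.single c 1) = fun h => pd e (curvU g a b c h) z := by
    funext h
    rw [trilinDeriv_apply, trilinOfCoeff_single, fderiv_single_apply (hd _ _ _ _)]
  funext h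
  simp only [curvMap, christoffelMap, h4, trilinOfCoeff_single, bilinOfCoeff_single]
  simp only [bilinOfCoeff_single_left, Pi.add_apply, Pi.sub_apply, Finset.sum_apply, Pi.smul_apply,
    smul_eq_mul, Pi.zero_apply, trilinOfCoeff_apply_single_single,
    trilinOfCoeff_single_apply_single, trilinOfCoeff_single_single_apply]
  exact curvU_parallel hgsym hu hg hflat a b c e h z

theorem christoffelMap_apply (g : (ι → ℝ) → Matrix ι ι ℝ) (z u v : ι → ℝ) (c : ι) :
    christoffelMap g z u v c = ∑ a, ∑ b, u a * v b * christoffelSnd g a b c z := by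
  simp only [christoffelMap, bilinOfCoeff_apply, Finset.sum_apply, Pi.smul_apply, smul_eq_mul,
    mul_assoc]

theorem metricMap_exp_neg (hgsym : ∀ z a b, g z a b = g z b a) (hu : ∀ z, IsUnit (g z))
    (hg : ∀ a b, ContDiff ℝ (⊤ : ℕ∞) fun z => g z a b)
    (hflat : ∀ (a b c d e : ι) (z : ι → ℝ), curvCov g a b c d e z = 0)
    {E : (ι → ℝ) → (ι → ℝ)} (hE : ContDiff ℝ (⊤ : ℕ∞) E)
    (hgeo : ∀ (v : ι → ℝ) (t : ℝ), HasDerivAt (fun s : ℝ => fderiv ℝ E (s • v) v)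
      (-christoffelMap g (E (t • v)) (fderiv ℝ E (t • v) v) (fderiv ℝ E (t • v) v)) t)
    (v u₁ u₂ : ι → ℝ) :
    metricMap g (E (-v)) (fderiv ℝ E (-v) u₁) (fderiv ℝ E (-v) u₂)
      = metricMap g (E v) (fderiv ℝ E v u₁) (fderiv ℝ E v u₂) := by
  have hsymm : ∀ a b z, (fun c => christoffelSnd g a b c z) = fun c => christoffelSnd g b a c z :=
    fun a b z => by simp only [christoffelSnd_comm hgsym a b]
  refine metric_exp_neg
    (isDerivOfBilin_bilinDeriv (differentiable_christoffelSnd_pi hg hu))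
    (fun z a b => bilinOfCoeff_comm (fun a b => hsymm a b z) a b) (fun z e a b => ?_)
    (isDerivOfBilin_bilinDeriv fun a b => (hg a b).differentiable (by simp))
    (metricMap_parallel hgsym hu)
    (isDerivOfTrilin_trilinDeriv (differentiable_curvU_pi hg hu)) (curvMap_eq hg hu)
    (curvMap_parallel hgsym hu hg hflat) hE hgeo v u₁ u₂
  rw [bilinDeriv_apply]
  exact bilinOfCoeff_comm
    (fun a b => congrArg (fun F => fderiv ℝ F z e) (funext (hsymm a b))) a b

/-- The vector field on the tangent bundle whose integral curves are the geodesics. -/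
noncomputable def geodesicField (g : (ι → ℝ) → Matrix ι ι ℝ) (p : (ι → ℝ) × (ι → ℝ)) :
    (ι → ℝ) × (ι → ℝ) :=
  (p.2, -christoffelMap g p.1 p.2 p.2)

theorem contDiff_geodesicField (hg : ∀ a b, ContDiff ℝ (⊤ : ℕ∞) fun z => g z a b)
    (hu : ∀ z, IsUnit (g z)) : ContDiff ℝ (⊤ : ℕ∞) (geodesicField g) := by
  refine contDiff_snd.prodMk (contDiff_pi.2 fun c => ?_).neg
  simp only [christoffelMap_apply]
  have hs : ∀ a, ContDiff ℝ (⊤ : ℕ∞) fun p : (ι → ℝ) × (ι → ℝ) => p.2 a := fun a =>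
    (contDiff_apply ℝ ℝ a).comp contDiff_snd
  exact ContDiff.sum fun a _ => ContDiff.sum fun b _ => ((hs a).mul (hs b)).mul
    ((contDiff_christoffelSnd hg hu a b c).comp contDiff_fst)

theorem eq_of_forall_hasDerivAt_of_contDiff {F : Type*} [NormedAddCommGroup F] [NormedSpace ℝ F]
    {f : F → F} (hf : ContDiff ℝ 1 f) {α β : ℝ → F} (hα : ∀ t, HasDerivAt α (f (α t)) t)
    (hβ : ∀ t, HasDerivAt β (f (β t)) t) {t₀ : ℝ} (h0 : α t₀ = β t₀) : α = β := by
  have hαc : Continuous α := continuous_of_forall_hasDerivAt hα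
  have hβc : Continuous β := continuous_of_forall_hasDerivAt hβ
  have hclopen : IsClopen {t | α t = β t} := by
    refine ⟨isClosed_eq hαc hβc, isOpen_iff_mem_nhds.2 fun t ht => ?_⟩
    obtain ⟨K, s, hs, hK⟩ := (hf.contDiffAt (x := α t)).exists_lipschitzOnWith
    have hs' : s ∈ nhds (β t) := by rwa [← show α t = β t from ht]
    exact ODE_solution_unique_of_eventually (v := fun _ => f) (s := fun _ => s)
      (.of_forall fun _ => hK)
      ((hαc.continuousAt.eventually hs).mono fun r hr => ⟨hα r, hr⟩)
      ((hβc.continuousAt.eventually hs').mono fun r hr => ⟨hβ r, hr⟩) ht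
  funext t
  exact (hclopen.eq_univ ⟨t₀, h0⟩).ge (Set.mem_univ t)

/-- The derivative form of the geodesic equation for a smooth exponential map. -/
theorem hasDerivAt_fderiv_exp {E : (ι → ℝ) → (ι → ℝ)} (hE : ContDiff ℝ (⊤ : ℕ∞) E)
    (hgeo : ∀ (v : ι → ℝ) (c : ι) (t : ℝ), HasDerivAt (deriv fun s : ℝ => E (s • v) c)
      (-(∑ a, ∑ b, deriv (fun s : ℝ => E (s • v) a) t * deriv (fun s : ℝ => E (s • v) b) t
          * christoffelSnd g a b c (E (t • v)))) t) (v : ι → ℝ) (t : ℝ) :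
    HasDerivAt (fun s : ℝ => fderiv ℝ E (s • v) v)
      (-christoffelMap g (E (t • v)) (fderiv ℝ E (t • v) v) (fderiv ℝ E (t • v) v)) t := by
  have hd : ∀ c, (deriv fun s : ℝ => E (s • v) c) = fun s => fderiv ℝ E (s • v) v c := fun c =>
    funext fun s => (hasDerivAt_pi.1 (hasDerivAt_smul_curve hE v s) c).deriv
  refine hasDerivAt_pi.2 fun c => ?_
  have := hgeo v c t
  simp only [hd] at this
  simpa only [Pi.neg_apply, christoffelMap_apply] using this

end TensorCalculus

/-- Theorem 1.8: let `(ℝ^ι, g)` be a pseudo-Riemannian manifold (in global coordinates) with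
parallel curvature tensor `∇R = 0` and such that the exponential map `exp_P` is a diffeomorphism
for every point `P`.  Then for any two points `P, Q` there is an isometry of the manifold taking
`P` to `Q`; hence the manifold is homogeneous. -/
theorem stmt16 {ι : Type*} [Fintype ι] [DecidableEq ι]
    (g : (ι → ℝ) → Matrix ι ι ℝ)
    (hgsym : ∀ z a b, g z a b = g z b a)
    (hginv : ∀ z, IsUnit (g z))
    (hgsm : ∀ a b, ContDiff ℝ (⊤ : ℕ∞) (fun z => g z a b))
    (hflat : ∀ (a b c d e : ι) (z : ι → ℝ), curvCov g a b c d e z = 0)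
    (expm : (ι → ℝ) → (ι → ℝ) → (ι → ℝ))
    -- for each `P` and `v`, `t ↦ expm P (t • v)` is the geodesic with `γ(0) = P`, `γ̇(0) = v`:
    (hexp0 : ∀ P, expm P 0 = P)
    (hexpdiff : ∀ P v c t, DifferentiableAt ℝ (fun s : ℝ => expm P (s • v) c) t)
    (hexpgeo : ∀ P v c t, HasDerivAt (deriv fun s : ℝ => expm P (s • v) c)
      (-(∑ a, ∑ b, deriv (fun s : ℝ => expm P (s • v) a) t
          * deriv (fun s : ℝ => expm P (s • v) b) t
          * christoffelSnd g a b c (expm P (t • v)))) t)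
    (hexpvel : ∀ P v c, deriv (fun s : ℝ => expm P (s • v) c) 0 = v c)
    -- each `exp_P` is a diffeomorphism:
    (hexpsm : ∀ P, ContDiff ℝ (⊤ : ℕ∞) (expm P))
    (hexpinv : ∀ P, ∃ ψ : (ι → ℝ) → (ι → ℝ), ContDiff ℝ (⊤ : ℕ∞) ψ ∧
      Function.LeftInverse ψ (expm P) ∧ Function.RightInverse ψ (expm P)) :
    ∀ P Q : ι → ℝ, ∃ φ : (ι → ℝ) → (ι → ℝ),
      ContDiff ℝ (⊤ : ℕ∞) φ ∧ Function.Bijective φ ∧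
      (∀ (z : ι → ℝ) (u v : ι → ℝ),
        (∑ a, ∑ b, g (φ z) a b * fderiv ℝ φ z u a * fderiv ℝ φ z v b)
          = ∑ a, ∑ b, g z a b * u a * v b) ∧
      φ P = Q := by
  intro P Q
  have hgeo := fun P => hasDerivAt_fderiv_exp (g := g) (hexpsm P) (hexpgeo P)
  have hvel : ∀ P v, fderiv ℝ (expm P) 0 v = v := fun P v => funext fun c => by
    have h := (hasDerivAt_pi.1 (hasDerivAt_smul_curve (hexpsm P) v 0) c).deriv
    rw [hexpvel, zero_smul] at h
    exact h.symm
  obtain ⟨ψP, -, -, hψP⟩ := hexpinv P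
  set v := ψP Q
  have hv : expm P v = Q := hψP Q
  set O := expm P ((1 / 2 : ℝ) • v)
  set w := fderiv ℝ (expm P) ((1 / 2 : ℝ) • v) v
  obtain ⟨ψ, hψs, hψl, hψr⟩ := hexpinv O
  have hcurve : (fun s : ℝ => (expm O (s • w), fderiv ℝ (expm O) (s • w) w))
      = fun s : ℝ => (expm P ((1 / 2 + s) • v), fderiv ℝ (expm P) ((1 / 2 + s) • v) v) := by
    refine eq_of_forall_hasDerivAt_of_contDiff
      ((contDiff_geodesicField hgsm hginv).of_le (by exact_mod_cast le_top))
      (fun t => (hasDerivAt_smul_curve (hexpsm O) w t).prodMk (hgeo O w t))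
      (fun t =>
        ((hasDerivAt_smul_curve (hexpsm P) v _).prodMk (hgeo P v _)).comp_const_add (1 / 2) t)
      (t₀ := 0) ?_
    simp [hexp0, hvel, O, w]
  have hcurve' : ∀ s : ℝ, expm O (s • w) = expm P ((1 / 2 + s) • v) := fun s =>
    congrArg Prod.fst (congrFun hcurve s)
  have hQ : expm O ((1 / 2 : ℝ) • w) = Q := by
    rw [hcurve', ← hv]
    norm_num
  have hP : expm O (-((1 / 2 : ℝ) • w)) = P := by
    rw [← neg_smul, hcurve']
    simp [hexp0]
  refine ⟨fun z => expm O (-ψ z), (hexpsm O).comp hψs.neg, ?_, fun z u₁ u₂ => ?_, ?_⟩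
  · exact (Function.bijective_iff_has_inverse.2 ⟨ψ, hψl, hψr⟩).comp
      ((Equiv.neg (ι → ℝ)).bijective.comp
        (Function.bijective_iff_has_inverse.2 ⟨expm O, hψr, hψl⟩))
  · have hψd := (hψs.differentiable (by simp) z).hasFDerivAt
    have hEd := fun x => ((hexpsm O).differentiable (by simp) x).hasFDerivAt
    have h1 : ∀ u, fderiv ℝ (fun z => expm O (-ψ z)) z u
        = -fderiv ℝ (expm O) (-ψ z) (fderiv ℝ ψ z u) := fun u => by
      have h : HasFDerivAt (fun z => expm O (-ψ z)) _ z := (hEd (-ψ z)).comp z hψd.fun_neg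
      rw [h.fderiv]
      simp
    have h2 : ∀ u, fderiv ℝ (expm O) (ψ z) (fderiv ℝ ψ z u) = u := fun u => by
      have h := (hEd (ψ z)).comp z hψd
      rw [show expm O ∘ ψ = id from funext hψr] at h
      exact congrArg (fun L : (ι → ℝ) →L[ℝ] (ι → ℝ) => L u) (h.unique (hasFDerivAt_id z))
    have h3 := metricMap_exp_neg hgsym hginv hgsm hflat (hexpsm O) (hgeo O) (ψ z)
      (fderiv ℝ ψ z u₁) (fderiv ℝ ψ z u₂)
    rw [h2, h2, hψr z, metricMap_apply, metricMap_apply] at h3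
    simpa only [h1, Pi.neg_apply, mul_neg, neg_mul, neg_neg] using h3
  · change expm O (-ψ P) = Q
    rw [← hQ]
    conv_lhs => rw [← hP, hψl, neg_neg]
end
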